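/- arXiv:2009.12755 — 6 statements merged into one kernel-verified Lean document; each statement's English description precedes it below -/
import Mathlib

section
/- (Comparison Theorem.) Suppose the moment condition E|Y|^{1+ε} = ∫_{X×ℝ} |y|^{1+ε} dρ(x,y) < ∞ holds for some ε > 0, that ‖f⋆‖_∞ ≤ M, and that σ > max(2M, 1). Then for every measurable function f : X → ℝ with ‖f‖_∞ ≤ M, one has | [R^σ(f) − R^σ(f⋆)] − ‖f − f⋆‖_{2,ρ}² | ≤ c_ε / σ^ε, where c_ε = 2^{3+ε}(M+1)² E|Y|^{1+ε}. -/
/-!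
The Huber loss is the square loss minus the squared excess `(|t| - σ)₊²`. For residuals `y - a`,
`y - b` with `|a|, |b| ≤ M ≤ σ / 2`, both excesses are at most `(|y| - σ / 2)₊` and they differ by
at most `2 * M`, so the increments of the two losses differ by at most `4 * M * (|y| - σ / 2)₊`,
which the moment of order `1 + ε` controls with a gain of `(σ / 2) ^ (-ε)`. For the square loss, the
excess risk over the conditional mean is exactly the squared `L²` distance, by orthogonality.
-/

open MeasureTheory

/-- The Huber loss with scale `σ`. -/
noncomputable def huberLoss (σ t : ℝ) : ℝ :=
  if |t| ≤ σ then t ^ 2 else 2 * σ * |t| - σ ^ 2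

lemma huberLoss_eq_sq_sub_sq_max (σ t : ℝ) :
    huberLoss σ t = t ^ 2 - max (|t| - σ) 0 ^ 2 := by
  unfold huberLoss
  split_ifs with h
  · rw [max_eq_right (by linarith)]; ring
  · rw [max_eq_left (by linarith)]; linear_combination sq_abs t

lemma measurable_huberLoss (σ : ℝ) : Measurable (huberLoss σ) := by
  simp only [funext (huberLoss_eq_sq_sub_sq_max σ)]
  fun_prop

lemma abs_huberLoss_le {σ : ℝ} (hσ : 0 ≤ σ) (t : ℝ) : |huberLoss σ t| ≤ 2 * σ * |t| := by
  have ht := abs_nonneg t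
  unfold huberLoss
  split_ifs with h
  · rw [abs_of_nonneg (sq_nonneg t), ← sq_abs]; nlinarith
  · rw [abs_of_nonneg (by nlinarith)]; nlinarith

lemma max_sub_zero_le_rpow_div_rpow {ε s u : ℝ} (hε : 0 ≤ ε) (hs : 0 < s) (hu : 0 ≤ u) :
    max (u - s) 0 ≤ u ^ (1 + ε) / s ^ ε := by
  refine max_le ?_ (by positivity)
  rcases le_total u s with hus | hsu
  · exact (sub_nonpos.2 hus).trans (by positivity)
  · rw [le_div_iff₀ (by positivity), Real.rpow_add (hs.trans_le hsu), Real.rpow_one]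
    gcongr
    linarith

lemma abs_max_abs_sub_sub_max_abs_sub_le (σ s t : ℝ) :
    |max (|s| - σ) 0 - max (|t| - σ) 0| ≤ |s - t| :=
  calc |max (|s| - σ) 0 - max (|t| - σ) 0|
      ≤ |(|s| - σ) - (|t| - σ)| := abs_max_sub_max_le_abs _ _ _
    _ = |(|s| - |t|)| := by rw [sub_sub_sub_cancel_right]
    _ ≤ |s - t| := abs_abs_sub_abs_le_abs_sub s t

lemma abs_huberLoss_sub_sub_sq_sub_sq_le {M σ a b y : ℝ} (hσ : 2 * M ≤ σ)
    (ha : |a| ≤ M) (hb : |b| ≤ M) :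
    |huberLoss σ (y - a) - huberLoss σ (y - b) - ((y - a) ^ 2 - (y - b) ^ 2)|
      ≤ 4 * M * max (|y| - σ / 2) 0 := by
  have hM : 0 ≤ M := (abs_nonneg a).trans ha
  have excess_le {c : ℝ} (hc : |c| ≤ M) : max (|y - c| - σ) 0 ≤ max (|y| - σ / 2) 0 :=
    max_le_max_right 0 (by linarith [abs_sub y c])
  have excess_sub_le : |max (|y - b| - σ) 0 - max (|y - a| - σ) 0| ≤ 2 * M :=
    calc _ ≤ |(y - b) - (y - a)| := abs_max_abs_sub_sub_max_abs_sub_le ..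
      _ = |a - b| := by rw [sub_sub_sub_cancel_left]
      _ ≤ 2 * M := by linarith [abs_sub a b]
  have hA := excess_le ha
  have hB := excess_le hb
  rw [huberLoss_eq_sq_sub_sq_max, huberLoss_eq_sq_sub_sq_max]
  set A := max (|y - a| - σ) 0
  set B := max (|y - b| - σ) 0
  have hAB : 0 ≤ B + A := add_nonneg (le_max_right ..) (le_max_right ..)
  calc _ = |(B - A) * (B + A)| := by ring_nf
    _ = |B - A| * (B + A) := by rw [abs_mul, abs_of_nonneg hAB]
    _ ≤ 2 * M * (2 * max (|y| - σ / 2) 0) := by gcongr; linarith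
    _ = 4 * M * max (|y| - σ / 2) 0 := by ring

lemma abs_huberLoss_sub_sub_sq_sub_sq_le_rpow {ε M σ a b y : ℝ} (hε : 0 ≤ ε) (hσ₀ : 0 < σ)
    (hσ : 2 * M ≤ σ) (ha : |a| ≤ M) (hb : |b| ≤ M) :
    |huberLoss σ (y - a) - huberLoss σ (y - b) - ((y - a) ^ 2 - (y - b) ^ 2)|
      ≤ 2 ^ (2 + ε) * M / σ ^ ε * |y| ^ (1 + ε) := by
  have hM : 0 ≤ M := (abs_nonneg a).trans ha
  calc _ ≤ 4 * M * max (|y| - σ / 2) 0 := abs_huberLoss_sub_sub_sq_sub_sq_le hσ ha hb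
    _ ≤ 4 * M * (|y| ^ (1 + ε) / (σ / 2) ^ ε) := by
      gcongr
      exact max_sub_zero_le_rpow_div_rpow hε (by positivity) (abs_nonneg y)
    _ = 2 ^ (2 + ε) * M / σ ^ ε * |y| ^ (1 + ε) := by
      rw [Real.div_rpow hσ₀.le zero_le_two, Real.rpow_add two_pos, Real.rpow_two]
      field_simp
      ring

section RandomVariables

variable {Ω : Type*} [MeasurableSpace Ω] {μ : Measure Ω} {U V Y : Ω → ℝ} {ε M σ : ℝ}

lemma integrable_of_integrable_norm_rpow [IsFiniteMeasure μ] {E : Type*} [NormedAddCommGroup E]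
    {g : Ω → E} {r : ℝ} (hr : 1 ≤ r) (hg : AEStronglyMeasurable g μ)
    (hmom : Integrable (fun ω => ‖g ω‖ ^ r) μ) : Integrable g μ := by
  rw [← integrable_norm_iff hg]
  simpa only [Real.rpow_one] using
    integrable_norm_rpow_of_le hg zero_le_one (zero_le_one.trans hr) hr hmom

lemma integrable_huberLoss_comp (hσ : 0 ≤ σ) (hY : Integrable Y μ) :
    Integrable (fun ω => huberLoss σ (Y ω)) μ :=
  (hY.abs.const_mul (2 * σ)).mono'
    ((measurable_huberLoss σ).comp_aemeasurable hY.aemeasurable).aestronglyMeasurable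
    (.of_forall fun ω => abs_huberLoss_le hσ (Y ω))

lemma integrable_sub_mul_of_abs_le {N : ℝ} {W : Ω → ℝ} (hU : AEStronglyMeasurable U μ)
    (hV : AEStronglyMeasurable V μ) (hUM : ∀ᵐ ω ∂μ, |U ω| ≤ M) (hVN : ∀ᵐ ω ∂μ, |V ω| ≤ N)
    (hW : Integrable W μ) : Integrable (fun ω => (U ω - V ω) * W ω) μ := by
  refine hW.bdd_mul (c := M + N) (hU.sub hV) ?_
  filter_upwards [hUM, hVN] with ω hUω hVω
  rw [Real.norm_eq_abs]
  linarith [abs_sub (U ω) (V ω)]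

lemma abs_integral_huberLoss_sub_sub_integral_sq_sub_sq_le [IsFiniteMeasure μ] (hε : 0 ≤ ε)
    (hσ₀ : 0 < σ) (hσ : 2 * M ≤ σ) (hY : AEStronglyMeasurable Y μ)
    (hmom : Integrable (fun ω => |Y ω| ^ (1 + ε)) μ)
    (hU : AEStronglyMeasurable U μ) (hUM : ∀ᵐ ω ∂μ, |U ω| ≤ M)
    (hV : AEStronglyMeasurable V μ) (hVM : ∀ᵐ ω ∂μ, |V ω| ≤ M) :
    |(∫ ω, huberLoss σ (Y ω - U ω) ∂μ) - (∫ ω, huberLoss σ (Y ω - V ω) ∂μ)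
        - ∫ ω, ((Y ω - U ω) ^ 2 - (Y ω - V ω) ^ 2) ∂μ|
      ≤ 2 ^ (2 + ε) * M * (∫ ω, |Y ω| ^ (1 + ε) ∂μ) / σ ^ ε := by
  have hYint : Integrable Y μ := integrable_of_integrable_norm_rpow (by linarith) hY hmom
  have hYU : Integrable (fun ω => Y ω - U ω) μ := hYint.sub (.of_bound hU M hUM)
  have hYV : Integrable (fun ω => Y ω - V ω) μ := hYint.sub (.of_bound hV M hVM)
  have hLU := integrable_huberLoss_comp hσ₀.le hYU
  have hLV := integrable_huberLoss_comp hσ₀.le hYV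
  have hL : Integrable (fun ω => huberLoss σ (Y ω - U ω) - huberLoss σ (Y ω - V ω)) μ :=
    hLU.sub hLV
  have hsq : Integrable (fun ω => (Y ω - U ω) ^ 2 - (Y ω - V ω) ^ 2) μ := by
    convert integrable_sub_mul_of_abs_le hV hU hVM hUM (hYU.add hYV) using 2 with ω
    simp only [Pi.add_apply]
    ring
  rw [← integral_sub hLU hLV, ← integral_sub hL hsq]
  calc _ ≤ ∫ ω, 2 ^ (2 + ε) * M / σ ^ ε * |Y ω| ^ (1 + ε) ∂μ := by
        rw [← Real.norm_eq_abs]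
        refine norm_integral_le_of_norm_le (hmom.const_mul _) ?_
        filter_upwards [hUM, hVM] with ω hUω hVω
        exact abs_huberLoss_sub_sub_sq_sub_sq_le_rpow hε hσ₀ hσ hUω hVω
    _ = 2 ^ (2 + ε) * M * (∫ ω, |Y ω| ^ (1 + ε) ∂μ) / σ ^ ε := by
        rw [integral_const_mul, div_mul_eq_mul_div]

end RandomVariables

section Regression

variable {X : Type*} [MeasurableSpace X] {ρ : Measure (X × ℝ)} {f h m : X → ℝ} {ε M σ : ℝ}

/-- The generalization error `R^σ(f)` of a predictor `f` under the Huber loss. -/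
noncomputable def huberRisk (ρ : Measure (X × ℝ)) (σ : ℝ) (f : X → ℝ) : ℝ :=
  ∫ p, huberLoss σ (p.2 - f p.1) ∂ρ

/-- `m` is a version of the conditional mean (regression) function `x ↦ E[Y | X = x]` of `ρ`,
with the conditional law of `Y` given by the disintegration kernel. Integrability of `Y` is not
part of the definition: where the conditional law has no mean, the integral is `0`. -/
def IsCondMean (ρ : Measure (X × ℝ)) [IsFiniteMeasure ρ] (m : X → ℝ) : Prop :=
  ∀ᵐ x ∂ρ.fst, m x = ∫ y, y ∂(ρ.condKernel x)

variable [IsFiniteMeasure ρ]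

namespace IsCondMean

lemma aestronglyMeasurable (hm : IsCondMean ρ m) : AEStronglyMeasurable m ρ.fst :=
  measurable_snd.aestronglyMeasurable.integral_condKernel.congr (hm.mono fun _ hx => hx.symm)

lemma integral_mul_snd_sub_eq_zero (hm : IsCondMean ρ m) (hY : Integrable Prod.snd ρ)
    (hint : Integrable (fun p : X × ℝ => h p.1 * (p.2 - m p.1)) ρ) :
    ∫ p, h p.1 * (p.2 - m p.1) ∂ρ = 0 := by
  rw [← Measure.integral_condKernel hint]
  refine integral_eq_zero_of_ae ?_
  filter_upwards [hm, hY.condKernel_ae] with x hmx hYx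
  simp [integral_const_mul, integral_sub hYx (integrable_const _), hmx]

lemma integral_sq_sub_sub_sq_sub (hm : IsCondMean ρ m) (hY : Integrable Prod.snd ρ)
    (hsq : Integrable (fun x => (f x - m x) ^ 2) ρ.fst)
    (hcross : Integrable (fun p : X × ℝ => (m p.1 - f p.1) * (p.2 - m p.1)) ρ) :
    ∫ p, ((p.2 - f p.1) ^ 2 - (p.2 - m p.1) ^ 2) ∂ρ = ∫ x, (f x - m x) ^ 2 ∂ρ.fst := by
  have hsqρ : Integrable (fun p : X × ℝ => (f p.1 - m p.1) ^ 2) ρ :=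
    hsq.comp_measurable measurable_fst
  calc ∫ p, ((p.2 - f p.1) ^ 2 - (p.2 - m p.1) ^ 2) ∂ρ
      = ∫ p, ((f p.1 - m p.1) ^ 2 + 2 * ((m p.1 - f p.1) * (p.2 - m p.1))) ∂ρ := by
        congr 1 with p; ring
    _ = ∫ p, (f p.1 - m p.1) ^ 2 ∂ρ := by
        rw [integral_add hsqρ (hcross.const_mul 2),
          integral_const_mul, hm.integral_mul_snd_sub_eq_zero (h := fun x => m x - f x) hY hcross,
          mul_zero, add_zero]
    _ = ∫ x, (f x - m x) ^ 2 ∂ρ.fst :=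
        (integral_map measurable_fst.aemeasurable hsq.aestronglyMeasurable).symm

end IsCondMean

theorem comparison_theorem_general (hε : 0 ≤ ε) (hσ₀ : 0 < σ) (hσ : 2 * M ≤ σ)
    (hmom : Integrable (fun p : X × ℝ => |p.2| ^ (1 + ε)) ρ)
    (hm : IsCondMean ρ m) (hmM : ∀ᵐ x ∂ρ.fst, |m x| ≤ M)
    (hf : AEStronglyMeasurable f ρ.fst) (hfM : ∀ᵐ x ∂ρ.fst, |f x| ≤ M) :
    |huberRisk ρ σ f - huberRisk ρ σ m - ∫ x, (f x - m x) ^ 2 ∂ρ.fst|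
      ≤ 2 ^ (2 + ε) * M * (∫ p, |p.2| ^ (1 + ε) ∂ρ) / σ ^ ε := by
  have hY : AEStronglyMeasurable (Prod.snd : X × ℝ → ℝ) ρ := by fun_prop
  have hYint : Integrable Prod.snd ρ :=
    integrable_of_integrable_norm_rpow (by linarith) hY hmom
  have hm' := hm.aestronglyMeasurable
  have hmint : Integrable m ρ.fst := .of_bound hm' M hmM
  have hfint : Integrable f ρ.fst := .of_bound hf M hfM
  have hsq : Integrable (fun x => (f x - m x) ^ 2) ρ.fst := by
    simpa only [sq, Pi.sub_apply] using
      integrable_sub_mul_of_abs_le hf hm' hfM hmM (hfint.sub hmint)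
  have hfρ := hf.comp_measurable measurable_fst
  have hmρ := hm'.comp_measurable measurable_fst
  have hfMρ := ae_of_ae_map measurable_fst.aemeasurable hfM
  have hmMρ := ae_of_ae_map measurable_fst.aemeasurable hmM
  have hcross : Integrable (fun p : X × ℝ => (m p.1 - f p.1) * (p.2 - m p.1)) ρ :=
    integrable_sub_mul_of_abs_le hmρ hfρ hmMρ hfMρ
      (hYint.sub (hmint.comp_measurable measurable_fst))
  rw [← hm.integral_sq_sub_sub_sq_sub hYint hsq hcross]
  exact abs_integral_huberLoss_sub_sub_integral_sq_sub_sq_le hε hσ₀ hσ hY hmom hfρ hfMρ hmρ hmMρ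

end Regression

lemma two_rpow_mul_le_two_rpow_mul_add_one_sq (ε M : ℝ) :
    (2 : ℝ) ^ (2 + ε) * M ≤ 2 ^ (3 + ε) * (M + 1) ^ 2 :=
  calc (2 : ℝ) ^ (2 + ε) * M ≤ 2 ^ (2 + ε) * (2 * (M + 1) ^ 2) := by
        gcongr
        nlinarith [sq_nonneg (M + 1)]
    _ = 2 ^ (3 + ε) * (M + 1) ^ 2 := by
        rw [show 3 + ε = (2 + ε) + 1 by ring, Real.rpow_add_one two_ne_zero]
        ring

/-- Comparison theorem: under the `(1+ε)`-moment condition, for every measurable `f`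
bounded by `M` and `σ > max(2M, 1)`,
`|[R^σ(f) − R^σ(f⋆)] − ‖f − f⋆‖²_{2,ρ}| ≤ c_ε / σ^ε` with
`c_ε = 2^{3+ε} (M+1)² E|Y|^{1+ε}`. -/
theorem comparison_theorem
    {X : Type*} [MeasurableSpace X] [MetricSpace X] [CompactSpace X] [BorelSpace X]
    (ρ : Measure (X × ℝ)) [IsProbabilityMeasure ρ]
    (ε M σ : ℝ) (hε : 0 < ε) (hσ : max (2 * M) 1 < σ)
    (hmom : Integrable (fun p : X × ℝ => |p.2| ^ (1 + ε)) ρ)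
    (fstar : X → ℝ) (hfstar_meas : Measurable fstar)
    (hfstar_bdd : ∀ x, |fstar x| ≤ M)
    (hfstar_mean : ∀ᵐ x ∂ρ.fst, fstar x = ∫ y, y ∂(ρ.condKernel x))
    (f : X → ℝ) (hf_meas : Measurable f) (hf_bdd : ∀ x, |f x| ≤ M) :
    |((∫ p, huberLoss σ (p.2 - f p.1) ∂ρ) - ∫ p, huberLoss σ (p.2 - fstar p.1) ∂ρ)
        - ∫ x, (f x - fstar x) ^ 2 ∂ρ.fst|
      ≤ (2 : ℝ) ^ (3 + ε) * (M + 1) ^ 2 * (∫ p, |p.2| ^ (1 + ε) ∂ρ) / σ ^ ε := by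
  obtain ⟨hσM, hσ₁⟩ := max_lt_iff.1 hσ
  exact (comparison_theorem_general hε.le (one_pos.trans hσ₁) hσM.le hmom hfstar_mean
    (.of_forall hfstar_bdd) hf_meas.aestronglyMeasurable (.of_forall hf_bdd)).trans
    (by gcongr ?_ * _ / _; exact two_rpow_mul_le_two_rpow_mul_add_one_sq ε M)
end

section
/- (Variance bound.) Suppose E|Y|^{1+ε} = ∫_{X×ℝ} |y|^{1+ε} dρ(x,y) < ∞ for some ε > 0, that ‖f⋆‖_∞ ≤ M, and that σ > max(2M, 1). For any measurable f : X → ℝ with ‖f‖_∞ ≤ M, the random variable ξ(x,y) = ℓ_σ(y − f(x)) − ℓ_σ(y − f⋆(x)) satisfies E[ξ²] ≤ c₁ ‖f − f⋆‖_{2,ρ}^{2(ε−1)₊/(ε+1)} + c₂ σ^{1−ε}, where c₁ = 64(M+1)²(E|Y|^{1+ε} + M² + 1), c₂ = 48M²(E|Y|^{1+ε} + M^{1+ε}) + 16M² E|Y|^{1+ε}, and (ε−1)₊ = max(ε−1, 0). -/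
open MeasureTheory

/-!
The Huber loss is a supremum of affine functions of `|t|`, namely of `2 s |t| - s ^ 2` over
`s ∈ [0, σ]`, and hence `2 min σ B`-Lipschitz on `[-B, B]`. Since `|Y - f|` and `|Y - f⋆|` are at
most `|Y| + M`, this gives `ξ ^ 2 ≤ 4 (f - f⋆) ^ 2 min(σ, |Y| + M) ^ 2`.

If `ε ≤ 1`, bound `(f - f⋆) ^ 2` by `(2 M) ^ 2` and interpolate
`min(σ, B) ^ 2 ≤ σ ^ (1 - ε) B ^ (1 + ε)`. If `ε ≥ 1`, Hölder's inequality for the weight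
`(f - f⋆) ^ 2` trades the moment of order `1 + ε` for the power `(ε - 1) / (ε + 1)` of
`E (f - f⋆) ^ 2`.
-/

section RealInequalities

lemma sub_sq_le_two_mul_sq_of_abs_le {M u v : ℝ} (hu : |u| ≤ M) (hv : |v| ≤ M) :
    (u - v) ^ 2 ≤ (2 * M) ^ 2 :=
  sq_le_sq' (by linarith [(abs_le.1 hu).1, (abs_le.1 hv).2])
    (by linarith [(abs_le.1 hu).2, (abs_le.1 hv).1])

lemma min_rpow_add_le_rpow_mul_rpow {a b r s : ℝ} (ha : 0 ≤ a) (hb : 0 ≤ b) (hr : 0 ≤ r)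
    (hs : 0 ≤ s) : min a b ^ (r + s) ≤ a ^ r * b ^ s := by
  rw [Real.rpow_add_of_nonneg (le_min ha hb) hr hs]
  gcongr
  · exact min_le_left a b
  · exact min_le_right a b

lemma add_rpow_le_two_mul_add {a b p : ℝ} (ha : 0 ≤ a) (hb : 0 ≤ b) (hp0 : 0 ≤ p) (hp2 : p ≤ 2) :
    (a + b) ^ p ≤ 2 * (a ^ p + b ^ p) := by
  rcases le_total p 1 with hp1 | hp1
  · calc (a + b) ^ p ≤ a ^ p + b ^ p := Real.rpow_add_le_add_rpow ha hb hp0 hp1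
      _ ≤ 2 * (a ^ p + b ^ p) := le_mul_of_one_le_left (by positivity) one_le_two
  · lift a to NNReal using ha
    lift b to NNReal using hb
    calc ((a : ℝ) + b) ^ p ≤ 2 ^ (p - 1) * ((a : ℝ) ^ p + (b : ℝ) ^ p) := by
          exact_mod_cast NNReal.rpow_add_le_mul_rpow_add_rpow a b hp1
      _ ≤ 2 * ((a : ℝ) ^ p + (b : ℝ) ^ p) := by
          gcongr
          exact Real.rpow_le_self_of_one_le one_le_two (by linarith)

lemma add_le_two_mul_rpow_add_rpow {a b p : ℝ} (ha : 0 ≤ a) (hb : 0 ≤ b) (hp : 0 < p) :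
    a + b ≤ 2 * (a ^ p + b ^ p) ^ p⁻¹ := by
  have ha_le : a ≤ (a ^ p + b ^ p) ^ p⁻¹ :=
    (Real.le_rpow_inv_iff_of_pos ha (by positivity) hp).2 (le_add_of_nonneg_right (by positivity))
  have hb_le : b ≤ (a ^ p + b ^ p) ^ p⁻¹ :=
    (Real.le_rpow_inv_iff_of_pos hb (by positivity) hp).2 (le_add_of_nonneg_left (by positivity))
  linarith

lemma rpow_le_one_add {a r : ℝ} (ha : 0 ≤ a) (hr0 : 0 ≤ r) (hr1 : r ≤ 1) : a ^ r ≤ 1 + a :=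
  calc a ^ r ≤ (1 + a) ^ r := by
        gcongr
        linarith
    _ ≤ 1 + a := Real.rpow_le_self_of_one_le (by linarith) hr1

lemma sqrt_rpow_two_mul_div {a : ℝ} (ha : 0 ≤ a) (r s : ℝ) :
    Real.sqrt a ^ (2 * r / s) = a ^ (r / s) := by
  rw [Real.sqrt_eq_rpow, ← Real.rpow_mul ha]
  congr 1
  ring

lemma sq_mul_add_rpow_rpow_two_div_le {A M p : ℝ} (hA : 0 ≤ A) (hM : 0 ≤ M) (hp : 2 ≤ p) :
    ((2 * M) ^ 2 * (A + M ^ p)) ^ (2 / p) ≤ 4 * (M + 1) ^ 2 * (A + M ^ 2 + 1) := by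
  have hr0 : 0 ≤ 2 / p := by positivity
  have hr1 : 2 / p ≤ 1 := (div_le_one (by positivity)).2 hp
  have hM_pow : (M ^ p) ^ (2 / p) = M ^ 2 := by
    rw [← Real.rpow_mul hM, mul_div_cancel₀ _ (by positivity), Real.rpow_two]
  rw [Real.mul_rpow (by positivity) (by positivity)]
  gcongr
  · calc ((2 * M) ^ 2) ^ (2 / p) ≤ 1 + (2 * M) ^ 2 := rpow_le_one_add (by positivity) hr0 hr1
      _ ≤ 4 * (M + 1) ^ 2 := by linarith
  · calc (A + M ^ p) ^ (2 / p) ≤ A ^ (2 / p) + (M ^ p) ^ (2 / p) :=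
          Real.rpow_add_le_add_rpow hA (by positivity) hr0 hr1
      _ ≤ A + M ^ 2 + 1 := by linarith [rpow_le_one_add hA hr0 hr1]

end RealInequalities

section HuberLoss

lemma huberLoss_eq_two_mul_min_mul_sub_sq (σ t : ℝ) :
    huberLoss σ t = 2 * min σ |t| * |t| - min σ |t| ^ 2 := by
  rw [huberLoss]
  split_ifs with h
  · rw [min_eq_right h, ← sq_abs t]
    ring
  · rw [min_eq_left (not_le.1 h).le]

lemma two_mul_sub_sq_le_huberLoss {σ s : ℝ} (hs : s ≤ σ) (t : ℝ) :
    2 * s * |t| - s ^ 2 ≤ huberLoss σ t := by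
  rw [huberLoss]
  split_ifs with h
  · linarith [sq_nonneg (|t| - s), sq_abs t]
  · linarith [mul_nonneg (sub_nonneg.2 hs) (by linarith : 0 ≤ 2 * |t| - σ - s)]

lemma huberLoss_sub_le (σ a b : ℝ) :
    huberLoss σ a - huberLoss σ b ≤ 2 * min σ |a| * (|a| - |b|) := by
  linarith [huberLoss_eq_two_mul_min_mul_sub_sq σ a,
    two_mul_sub_sq_le_huberLoss (min_le_left σ |a|) b]

lemma abs_huberLoss_sub_le {σ B a b : ℝ} (hσ : 0 ≤ σ) (ha : |a| ≤ B) (hb : |b| ≤ B) :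
    |huberLoss σ a - huberLoss σ b| ≤ 2 * min σ B * |a - b| := by
  have one_sided {u v : ℝ} (hu : |u| ≤ B) :
      huberLoss σ u - huberLoss σ v ≤ 2 * min σ B * |u - v| :=
    calc huberLoss σ u - huberLoss σ v
        ≤ 2 * min σ |u| * (|u| - |v|) := huberLoss_sub_le σ u v
      _ ≤ 2 * min σ |u| * |u - v| := by
          gcongr
          exact abs_sub_abs_le_abs_sub u v
      _ ≤ 2 * min σ B * |u - v| := by gcongr
  rw [abs_sub_le_iff]
  exact ⟨one_sided ha, abs_sub_comm a b ▸ one_sided hb⟩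

lemma sq_huberLoss_sub_sub_le {σ M u v : ℝ} (hσ : 0 ≤ σ) (hu : |u| ≤ M) (hv : |v| ≤ M) (y : ℝ) :
    (huberLoss σ (y - u) - huberLoss σ (y - v)) ^ 2
      ≤ 4 * (u - v) ^ 2 * min σ (|y| + M) ^ 2 := by
  have lipschitz : |huberLoss σ (y - u) - huberLoss σ (y - v)|
      ≤ 2 * min σ (|y| + M) * |y - u - (y - v)| :=
    abs_huberLoss_sub_le hσ ((abs_sub y u).trans (by gcongr)) ((abs_sub y v).trans (by gcongr))
  calc (huberLoss σ (y - u) - huberLoss σ (y - v)) ^ 2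
      ≤ (2 * min σ (|y| + M) * |y - u - (y - v)|) ^ 2 := by
        rw [← sq_abs]
        gcongr
    _ = 4 * (u - v) ^ 2 * min σ (|y| + M) ^ 2 := by
        rw [mul_pow, sq_abs]
        ring

lemma sq_huberLoss_sub_sub_le_rpow {σ M p u v : ℝ} (hσ : 0 ≤ σ) (hp : 0 < p) (hu : |u| ≤ M)
    (hv : |v| ≤ M) (y : ℝ) :
    (huberLoss σ (y - u) - huberLoss σ (y - v)) ^ 2
      ≤ 16 * ((u - v) ^ 2 * (|y| ^ p + M ^ p) ^ (2 / p)) := by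
  have hM : 0 ≤ M := (abs_nonneg u).trans hu
  have hs : 0 ≤ |y| ^ p + M ^ p := by positivity
  calc (huberLoss σ (y - u) - huberLoss σ (y - v)) ^ 2
      ≤ 4 * (u - v) ^ 2 * min σ (|y| + M) ^ 2 := sq_huberLoss_sub_sub_le hσ hu hv y
    _ ≤ 4 * (u - v) ^ 2 * (2 * (|y| ^ p + M ^ p) ^ p⁻¹) ^ 2 := by
        gcongr
        exact (min_le_right _ _).trans (add_le_two_mul_rpow_add_rpow (abs_nonneg y) hM hp)
    _ = 16 * ((u - v) ^ 2 * (|y| ^ p + M ^ p) ^ (2 / p)) := by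
        rw [mul_pow, ← Real.rpow_mul_natCast hs, Nat.cast_ofNat, inv_mul_eq_div]
        ring

end HuberLoss

section Integrals

variable {Ω : Type*} [MeasurableSpace Ω] {μ : Measure Ω}

lemma integral_rpow_mul_rpow_le {f g : Ω → ℝ} {r s : ℝ} (hf : Integrable f μ)
    (hg : Integrable g μ) (hf0 : 0 ≤ᵐ[μ] f) (hg0 : 0 ≤ᵐ[μ] g) (hr : 0 ≤ r) (hs : 0 ≤ s)
    (hrs : r + s = 1) :
    ∫ ω, f ω ^ r * g ω ^ s ∂μ ≤ (∫ ω, f ω ∂μ) ^ r * (∫ ω, g ω ∂μ) ^ s := by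
  have holder : ∫⁻ ω, ENNReal.ofReal (f ω ^ r * g ω ^ s) ∂μ
      ≤ ENNReal.ofReal ((∫ ω, f ω ∂μ) ^ r * (∫ ω, g ω ∂μ) ^ s) :=
    calc ∫⁻ ω, ENNReal.ofReal (f ω ^ r * g ω ^ s) ∂μ
        = ∫⁻ ω, ENNReal.ofReal (f ω) ^ r * ENNReal.ofReal (g ω) ^ s ∂μ := by
          refine lintegral_congr_ae ?_
          filter_upwards [hf0, hg0] with ω hfω hgω
          rw [ENNReal.ofReal_mul (Real.rpow_nonneg hfω r), ENNReal.ofReal_rpow_of_nonneg hfω hr,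
            ENNReal.ofReal_rpow_of_nonneg hgω hs]
      _ ≤ (∫⁻ ω, ENNReal.ofReal (f ω) ∂μ) ^ r * (∫⁻ ω, ENNReal.ofReal (g ω) ∂μ) ^ s :=
          ENNReal.lintegral_mul_norm_pow_le hf.aemeasurable.ennreal_ofReal
            hg.aemeasurable.ennreal_ofReal hr hs hrs
      _ = ENNReal.ofReal ((∫ ω, f ω ∂μ) ^ r * (∫ ω, g ω ∂μ) ^ s) := by
          have hf_int : 0 ≤ ∫ ω, f ω ∂μ := integral_nonneg_of_ae hf0
          have hg_int : 0 ≤ ∫ ω, g ω ∂μ := integral_nonneg_of_ae hg0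
          rw [← ofReal_integral_eq_lintegral_ofReal hf hf0,
            ← ofReal_integral_eq_lintegral_ofReal hg hg0, ENNReal.ofReal_rpow_of_nonneg hf_int hr,
            ENNReal.ofReal_rpow_of_nonneg hg_int hs, ← ENNReal.ofReal_mul (by positivity)]
  have hfg0 : 0 ≤ᵐ[μ] fun ω => f ω ^ r * g ω ^ s := by
    filter_upwards [hf0, hg0] with ω hfω hgω
    exact mul_nonneg (Real.rpow_nonneg hfω r) (Real.rpow_nonneg hgω s)
  rw [integral_eq_lintegral_of_nonneg_ae hfg0
    ((hf.aemeasurable.pow_const r).mul (hg.aemeasurable.pow_const s)).aestronglyMeasurable]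
  exact ENNReal.toReal_le_of_le_ofReal
    (mul_nonneg (Real.rpow_nonneg (integral_nonneg_of_ae hf0) r)
      (Real.rpow_nonneg (integral_nonneg_of_ae hg0) s)) holder

lemma integral_mul_rpow_le_of_le {w g : Ω → ℝ} {K r s : ℝ} (hw : Integrable w μ)
    (hg : Integrable g μ) (hw0 : 0 ≤ᵐ[μ] w) (hwK : ∀ᵐ ω ∂μ, w ω ≤ K) (hg0 : 0 ≤ᵐ[μ] g)
    (hr : 0 ≤ r) (hs : 0 ≤ s) (hrs : r + s = 1) :
    ∫ ω, w ω * g ω ^ s ∂μ ≤ (∫ ω, w ω ∂μ) ^ r * (K * ∫ ω, g ω ∂μ) ^ s := by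
  have hwg : Integrable (fun ω => w ω * g ω) μ := by
    refine hg.bdd_mul (c := K) hw.aestronglyMeasurable ?_
    filter_upwards [hw0, hwK] with ω h0 hK
    rwa [Real.norm_of_nonneg h0]
  have hwg0 : 0 ≤ᵐ[μ] fun ω => w ω * g ω := by
    filter_upwards [hw0, hg0] with ω hwω hgω using mul_nonneg hwω hgω
  calc ∫ ω, w ω * g ω ^ s ∂μ = ∫ ω, w ω ^ r * (w ω * g ω) ^ s ∂μ := by
        refine integral_congr_ae ?_
        filter_upwards [hw0, hg0] with ω hwω hgω
        rw [Real.mul_rpow hwω hgω, ← mul_assoc, ← Real.rpow_add_of_nonneg hwω hr hs, hrs,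
          Real.rpow_one]
    _ ≤ (∫ ω, w ω ∂μ) ^ r * (∫ ω, w ω * g ω ∂μ) ^ s :=
        integral_rpow_mul_rpow_le hw hwg hw0 hwg0 hr hs hrs
    _ ≤ (∫ ω, w ω ∂μ) ^ r * (K * ∫ ω, g ω ∂μ) ^ s := by
        have hwg_le : ∫ ω, w ω * g ω ∂μ ≤ K * ∫ ω, g ω ∂μ := by
          rw [← integral_const_mul]
          refine integral_mono_ae hwg (hg.const_mul K) ?_
          filter_upwards [hwK, hg0] with ω hK hgω using mul_le_mul_of_nonneg_right hK hgω
        exact mul_le_mul_of_nonneg_left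
          (Real.rpow_le_rpow (integral_nonneg_of_ae hwg0) hwg_le hs)
          (Real.rpow_nonneg (integral_nonneg_of_ae hw0) r)

lemma integral_add_const [IsProbabilityMeasure μ] {g : Ω → ℝ} (hg : Integrable g μ) (c : ℝ) :
    ∫ ω, g ω + c ∂μ = (∫ ω, g ω ∂μ) + c := by
  rw [integral_add hg (integrable_const c), integral_const, probReal_univ, one_smul]

lemma integrable_rpow_of_le_one [IsFiniteMeasure μ] {g : Ω → ℝ} {s : ℝ} (hg : Integrable g μ)
    (hg0 : 0 ≤ᵐ[μ] g) (hs0 : 0 ≤ s) (hs1 : s ≤ 1) : Integrable (fun ω => g ω ^ s) μ := by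
  refine ((integrable_const 1).add hg).mono' (hg.aemeasurable.pow_const s).aestronglyMeasurable ?_
  filter_upwards [hg0] with ω hgω
  rw [Real.norm_of_nonneg (Real.rpow_nonneg hgω s)]
  exact rpow_le_one_add hgω hs0 hs1

end Integrals

section SecondMoment

variable {Ω : Type*} [MeasurableSpace Ω] {μ : Measure Ω} [IsProbabilityMeasure μ]
  {ε M σ : ℝ} {Y f g : Ω → ℝ}

lemma integral_sq_huberLoss_sub_le_of_le_one (hσ : 0 ≤ σ) (hε : -1 ≤ ε) (hε1 : ε ≤ 1)
    (hY : Integrable (fun ω => |Y ω| ^ (1 + ε)) μ)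
    (hf : ∀ᵐ ω ∂μ, |f ω| ≤ M) (hg : ∀ᵐ ω ∂μ, |g ω| ≤ M) :
    ∫ ω, (huberLoss σ (Y ω - f ω) - huberLoss σ (Y ω - g ω)) ^ 2 ∂μ
      ≤ 32 * M ^ 2 * σ ^ (1 - ε) * ((∫ ω, |Y ω| ^ (1 + ε) ∂μ) + M ^ (1 + ε)) := by
  rw [← integral_add_const hY, ← integral_const_mul]
  refine integral_mono_of_nonneg (ae_of_all μ fun ω => sq_nonneg _)
    ((hY.add (integrable_const (M ^ (1 + ε)))).const_mul _) ?_
  filter_upwards [hf, hg] with ω hfω hgω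
  have hM : 0 ≤ M := (abs_nonneg _).trans hfω
  have interpolation : min σ (|Y ω| + M) ^ 2 ≤ σ ^ (1 - ε) * (|Y ω| + M) ^ (1 + ε) := by
    have h := min_rpow_add_le_rpow_mul_rpow hσ (by positivity : 0 ≤ |Y ω| + M)
      (by linarith : 0 ≤ 1 - ε) (by linarith : 0 ≤ 1 + ε)
    rwa [show 1 - ε + (1 + ε) = 2 by ring, Real.rpow_two] at h
  calc (huberLoss σ (Y ω - f ω) - huberLoss σ (Y ω - g ω)) ^ 2
      ≤ 4 * (f ω - g ω) ^ 2 * min σ (|Y ω| + M) ^ 2 := sq_huberLoss_sub_sub_le hσ hfω hgω (Y ω)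
    _ ≤ 4 * (2 * M) ^ 2 * (σ ^ (1 - ε) * (2 * (|Y ω| ^ (1 + ε) + M ^ (1 + ε)))) := by
        gcongr ?_ * ?_
        · gcongr 4 * ?_
          exact sub_sq_le_two_mul_sq_of_abs_le hfω hgω
        · refine interpolation.trans ?_
          gcongr
          exact add_rpow_le_two_mul_add (abs_nonneg _) hM (by linarith) (by linarith)
    _ = 32 * M ^ 2 * σ ^ (1 - ε) * (|Y ω| ^ (1 + ε) + M ^ (1 + ε)) := by ring

lemma integral_sq_huberLoss_sub_le_of_one_le (hσ : 0 ≤ σ) (hε : 1 ≤ ε)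
    (hY : Integrable (fun ω => |Y ω| ^ (1 + ε)) μ)
    (hf_meas : AEStronglyMeasurable f μ) (hg_meas : AEStronglyMeasurable g μ)
    (hf : ∀ᵐ ω ∂μ, |f ω| ≤ M) (hg : ∀ᵐ ω ∂μ, |g ω| ≤ M) :
    ∫ ω, (huberLoss σ (Y ω - f ω) - huberLoss σ (Y ω - g ω)) ^ 2 ∂μ
      ≤ 16 * ((∫ ω, (f ω - g ω) ^ 2 ∂μ) ^ ((ε - 1) / (ε + 1))
          * ((2 * M) ^ 2 * ((∫ ω, |Y ω| ^ (1 + ε) ∂μ) + M ^ (1 + ε))) ^ (2 / (1 + ε))) := by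
  obtain ⟨ω₀, hω₀⟩ := hf.exists
  have hM : 0 ≤ M := (abs_nonneg _).trans hω₀
  have hθ : 2 / (1 + ε) ≤ 1 := (div_le_one (by linarith)).2 (by linarith)
  have hw_le : ∀ᵐ ω ∂μ, (f ω - g ω) ^ 2 ≤ (2 * M) ^ 2 := by
    filter_upwards [hf, hg] with ω hfω hgω using sub_sq_le_two_mul_sq_of_abs_le hfω hgω
  have hw_norm : ∀ᵐ ω ∂μ, ‖(f ω - g ω) ^ 2‖ ≤ (2 * M) ^ 2 := by
    simpa only [Real.norm_of_nonneg (sq_nonneg _)] using hw_le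
  have hw : Integrable (fun ω => (f ω - g ω) ^ 2) μ :=
    .of_bound ((hf_meas.sub hg_meas).pow 2) ((2 * M) ^ 2) hw_norm
  have hYM : Integrable (fun ω => |Y ω| ^ (1 + ε) + M ^ (1 + ε)) μ :=
    hY.add (integrable_const _)
  have hYM0 : ∀ ω, 0 ≤ |Y ω| ^ (1 + ε) + M ^ (1 + ε) := fun ω => by positivity
  have hwYM : Integrable
      (fun ω => (f ω - g ω) ^ 2 * (|Y ω| ^ (1 + ε) + M ^ (1 + ε)) ^ (2 / (1 + ε))) μ :=
    (integrable_rpow_of_le_one hYM (ae_of_all μ hYM0) (by positivity) hθ).bdd_mul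
      hw.aestronglyMeasurable hw_norm
  calc ∫ ω, (huberLoss σ (Y ω - f ω) - huberLoss σ (Y ω - g ω)) ^ 2 ∂μ
      ≤ ∫ ω, 16 * ((f ω - g ω) ^ 2 * (|Y ω| ^ (1 + ε) + M ^ (1 + ε)) ^ (2 / (1 + ε))) ∂μ := by
        refine integral_mono_of_nonneg (ae_of_all μ fun ω => sq_nonneg _) (hwYM.const_mul 16) ?_
        filter_upwards [hf, hg] with ω hfω hgω
        exact sq_huberLoss_sub_sub_le_rpow hσ (by linarith) hfω hgω (Y ω)
    _ = 16 * ∫ ω, (f ω - g ω) ^ 2 * (|Y ω| ^ (1 + ε) + M ^ (1 + ε)) ^ (2 / (1 + ε)) ∂μ :=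
        integral_const_mul _ _
    _ ≤ 16 * ((∫ ω, (f ω - g ω) ^ 2 ∂μ) ^ ((ε - 1) / (ε + 1))
          * ((2 * M) ^ 2 * ((∫ ω, |Y ω| ^ (1 + ε) ∂μ) + M ^ (1 + ε))) ^ (2 / (1 + ε))) := by
        rw [← integral_add_const hY]
        gcongr
        refine integral_mul_rpow_le_of_le hw hYM (ae_of_all μ fun ω => sq_nonneg _) hw_le
          (ae_of_all μ hYM0) (div_nonneg (by linarith) (by linarith)) (by positivity) ?_
        field_simp
        ring

theorem variance_bound_general (hσ : 0 ≤ σ) (hε : -1 < ε)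
    (hY : Integrable (fun ω => |Y ω| ^ (1 + ε)) μ)
    (hf_meas : AEStronglyMeasurable f μ) (hg_meas : AEStronglyMeasurable g μ)
    (hf : ∀ᵐ ω ∂μ, |f ω| ≤ M) (hg : ∀ᵐ ω ∂μ, |g ω| ≤ M) :
    ∫ ω, (huberLoss σ (Y ω - f ω) - huberLoss σ (Y ω - g ω)) ^ 2 ∂μ
      ≤ 64 * (M + 1) ^ 2 * ((∫ ω, |Y ω| ^ (1 + ε) ∂μ) + M ^ 2 + 1)
          * (Real.sqrt (∫ ω, (f ω - g ω) ^ 2 ∂μ)) ^ (2 * max (ε - 1) 0 / (ε + 1))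
        + (48 * M ^ 2 * ((∫ ω, |Y ω| ^ (1 + ε) ∂μ) + M ^ (1 + ε))
            + 16 * M ^ 2 * (∫ ω, |Y ω| ^ (1 + ε) ∂μ)) * σ ^ (1 - ε) := by
  obtain ⟨ω₀, hω₀⟩ := hf.exists
  have hM : 0 ≤ M := (abs_nonneg _).trans hω₀
  have hA : 0 ≤ ∫ ω, |Y ω| ^ (1 + ε) ∂μ := integral_nonneg fun ω => by positivity
  set A := ∫ ω, |Y ω| ^ (1 + ε) ∂μ
  rcases le_total ε 1 with hε1 | hε1
  · refine (integral_sq_huberLoss_sub_le_of_le_one hσ hε.le hε1 hY hf hg).trans ?_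
    refine le_add_of_nonneg_of_le (by positivity) ?_
    calc 32 * M ^ 2 * σ ^ (1 - ε) * (A + M ^ (1 + ε))
        = 32 * M ^ 2 * (A + M ^ (1 + ε)) * σ ^ (1 - ε) := by ring
      _ ≤ (48 * M ^ 2 * (A + M ^ (1 + ε)) + 16 * M ^ 2 * A) * σ ^ (1 - ε) := by
          gcongr
          exact le_add_of_le_of_nonneg (by gcongr; norm_num) (by positivity)
  · refine (integral_sq_huberLoss_sub_le_of_one_le hσ hε1 hY hf_meas hg_meas hf hg).trans ?_
    refine le_add_of_le_of_nonneg ?_ (by positivity)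
    rw [max_eq_left (sub_nonneg.2 hε1),
      sqrt_rpow_two_mul_div (integral_nonneg fun ω => sq_nonneg _)]
    set S := (∫ ω, (f ω - g ω) ^ 2 ∂μ) ^ ((ε - 1) / (ε + 1))
    have : 0 ≤ S := Real.rpow_nonneg (integral_nonneg fun ω => sq_nonneg _) _
    calc 16 * (S * ((2 * M) ^ 2 * (A + M ^ (1 + ε))) ^ (2 / (1 + ε)))
        ≤ 16 * (S * (4 * (M + 1) ^ 2 * (A + M ^ 2 + 1))) := by
          gcongr
          exact sq_mul_add_rpow_rpow_two_div_le hA hM (by linarith)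
      _ = 64 * (M + 1) ^ 2 * (A + M ^ 2 + 1) * S := by ring

end SecondMoment

/-- Variance bound: under the `(1+ε)`-moment condition, for measurable `f` bounded by `M`
and `σ > max(2M,1)`, the random variable `ξ(x,y) = ℓ_σ(y−f(x)) − ℓ_σ(y−f⋆(x))` satisfies
`E[ξ²] ≤ c₁ ‖f−f⋆‖_{2,ρ}^{2(ε−1)₊/(ε+1)} + c₂ σ^{1−ε}` with
`c₁ = 64(M+1)²(E|Y|^{1+ε}+M²+1)` and `c₂ = 48M²(E|Y|^{1+ε}+M^{1+ε}) + 16M² E|Y|^{1+ε}`. -/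
theorem variance_bound
    {X : Type*} [MeasurableSpace X] [MetricSpace X] [CompactSpace X] [BorelSpace X]
    (ρ : Measure (X × ℝ)) [IsProbabilityMeasure ρ]
    (ε M σ : ℝ) (hε : 0 < ε) (hσ : max (2 * M) 1 < σ)
    (hmom : Integrable (fun p : X × ℝ => |p.2| ^ (1 + ε)) ρ)
    (fstar : X → ℝ) (hfstar_meas : Measurable fstar)
    (hfstar_bdd : ∀ x, |fstar x| ≤ M)
    (hfstar_mean : ∀ᵐ x ∂ρ.fst, fstar x = ∫ y, y ∂(ρ.condKernel x))
    (f : X → ℝ) (hf_meas : Measurable f) (hf_bdd : ∀ x, |f x| ≤ M) :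
    (∫ p, (huberLoss σ (p.2 - f p.1) - huberLoss σ (p.2 - fstar p.1)) ^ 2 ∂ρ)
      ≤ 64 * (M + 1) ^ 2 * ((∫ p, |p.2| ^ (1 + ε) ∂ρ) + M ^ 2 + 1)
          * (Real.sqrt (∫ x, (f x - fstar x) ^ 2 ∂ρ.fst)) ^ (2 * max (ε - 1) 0 / (ε + 1))
        + (48 * M ^ 2 * ((∫ p, |p.2| ^ (1 + ε) ∂ρ) + M ^ (1 + ε))
            + 16 * M ^ 2 * (∫ p, |p.2| ^ (1 + ε) ∂ρ)) * σ ^ (1 - ε) := by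
  have hnorm : ∫ x, (f x - fstar x) ^ 2 ∂ρ.fst = ∫ p, (f p.1 - fstar p.1) ^ 2 ∂ρ :=
    integral_map measurable_fst.aemeasurable
      ((hf_meas.sub hfstar_meas).pow_const 2).aestronglyMeasurable
  rw [hnorm]
  exact variance_bound_general (by linarith [le_max_right (2 * M) 1]) (by linarith) hmom
    (hf_meas.comp measurable_fst).aestronglyMeasurable
    (hfstar_meas.comp measurable_fst).aestronglyMeasurable
    (ae_of_all ρ fun p => hf_bdd p.1) (ae_of_all ρ fun p => hfstar_bdd p.1)
end

section
/- (Square-loss tail estimate.) Suppose E|Y|^{1+ε} < ∞ for some ε > 0, ‖f⋆‖_∞ ≤ M, σ > max(2M,1), and f : X → ℝ is measurable with ‖f‖_∞ ≤ M. Then | ∫_{{(x,y) : |y| ≥ σ/2}} [(y − f(x))² − (y − f⋆(x))²] dρ(x,y) | ≤ 2^{1+ε} ‖f − f⋆‖_∞ E|Y|^{1+ε} / σ^ε + 2^{1+ε} (‖f‖_∞ + ‖f⋆‖_∞)² E|Y|^{1+ε} / σ^{1+ε}. -/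
open MeasureTheory

/-!
Factoring a difference of squares, the two losses differ at `y` by at most
`‖u - v‖ * (2 * ‖y‖ + ‖u‖ + ‖v‖)`, that is, by a term linear in `‖y‖` and a constant term. On the
tail `‖y‖ ≥ σ / 2` both are dominated by multiples of `‖y‖ ^ (1 + ε)`, the linear term at the price
of a factor `(σ / 2) ^ (-ε)` and the constant term at the price of `(σ / 2) ^ (-(1 + ε))`, as in
Markov's inequality.
-/

lemma rpow_le_rpow_add_div_rpow {s t : ℝ} (a : ℝ) {b : ℝ} (hs : 0 < s) (hst : s ≤ t) (hb : 0 ≤ b) :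
    t ^ a ≤ t ^ (a + b) / s ^ b := by
  have ht : 0 < t := hs.trans_le hst
  rw [le_div_iff₀ (Real.rpow_pos_of_pos hs b), Real.rpow_add ht]
  gcongr

section NormedGroup

variable {E : Type*} [SeminormedAddCommGroup E]

lemma abs_norm_sub_sq_sub_norm_sub_sq_le (y u v : E) :
    |‖y - u‖ ^ 2 - ‖y - v‖ ^ 2| ≤ 2 * ‖u - v‖ * ‖y‖ + (‖u‖ + ‖v‖) ^ 2 := by
  have hdiff : |‖y - u‖ - ‖y - v‖| ≤ ‖u - v‖ := by
    simpa only [sub_sub_sub_cancel_left, norm_sub_rev v u] using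
      abs_norm_sub_norm_le (y - u) (y - v)
  calc |‖y - u‖ ^ 2 - ‖y - v‖ ^ 2|
      = (‖y - u‖ + ‖y - v‖) * |‖y - u‖ - ‖y - v‖| := by
        rw [sq_sub_sq, abs_mul, abs_of_nonneg (by positivity)]
    _ ≤ ((‖y‖ + ‖u‖) + (‖y‖ + ‖v‖)) * ‖u - v‖ := by
        gcongr <;> exact norm_sub_le _ _
    _ = 2 * ‖u - v‖ * ‖y‖ + (‖u‖ + ‖v‖) * ‖u - v‖ := by ring
    _ ≤ 2 * ‖u - v‖ * ‖y‖ + (‖u‖ + ‖v‖) * (‖u‖ + ‖v‖) := by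
        gcongr
        exact norm_sub_le u v
    _ = 2 * ‖u - v‖ * ‖y‖ + (‖u‖ + ‖v‖) ^ 2 := by rw [sq]

lemma abs_norm_sub_sq_sub_norm_sub_sq_le_mul_rpow {s ε : ℝ} {y : E} (hs : 0 < s) (hε : 0 ≤ ε)
    (hy : s ≤ ‖y‖) (u v : E) :
    |‖y - u‖ ^ 2 - ‖y - v‖ ^ 2| ≤
      (2 * ‖u - v‖ / s ^ ε + (‖u‖ + ‖v‖) ^ 2 / s ^ (1 + ε)) * ‖y‖ ^ (1 + ε) := by
  have hlinear : ‖y‖ ≤ ‖y‖ ^ (1 + ε) / s ^ ε := by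
    simpa only [Real.rpow_one] using rpow_le_rpow_add_div_rpow 1 hs hy hε
  have hconst : 1 ≤ ‖y‖ ^ (1 + ε) / s ^ (1 + ε) := by
    simpa only [Real.rpow_zero, zero_add] using
      rpow_le_rpow_add_div_rpow 0 hs hy (add_nonneg zero_le_one hε)
  calc |‖y - u‖ ^ 2 - ‖y - v‖ ^ 2|
      ≤ 2 * ‖u - v‖ * ‖y‖ + (‖u‖ + ‖v‖) ^ 2 * 1 := by
        simpa only [mul_one] using abs_norm_sub_sq_sub_norm_sub_sq_le y u v
    _ ≤ 2 * ‖u - v‖ * (‖y‖ ^ (1 + ε) / s ^ ε)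
          + (‖u‖ + ‖v‖) ^ 2 * (‖y‖ ^ (1 + ε) / s ^ (1 + ε)) := by gcongr
    _ = _ := by ring

lemma abs_norm_sub_sq_sub_norm_sub_sq_le_iSup_mul_rpow {X : Type*} {f g : X → E} {s ε : ℝ} {y : E}
    (hs : 0 < s) (hε : 0 ≤ ε) (hy : s ≤ ‖y‖) (hf : BddAbove (Set.range fun x ↦ ‖f x‖))
    (hg : BddAbove (Set.range fun x ↦ ‖g x‖)) (x : X) :
    |‖y - f x‖ ^ 2 - ‖y - g x‖ ^ 2| ≤
      (2 * (⨆ x, ‖f x - g x‖) / s ^ ε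
        + ((⨆ x, ‖f x‖) + ⨆ x, ‖g x‖) ^ 2 / s ^ (1 + ε)) * ‖y‖ ^ (1 + ε) := by
  have hfg : BddAbove (Set.range fun x ↦ ‖f x - g x‖) :=
    (hf.range_add hg).range_mono _ fun _ ↦ norm_sub_le _ _
  refine (abs_norm_sub_sq_sub_norm_sub_sq_le_mul_rpow hs hε hy (f x) (g x)).trans ?_
  gcongr
  exacts [le_ciSup hfg x, le_ciSup hf x, le_ciSup hg x]

variable [MeasurableSpace E] [BorelSpace E] [SecondCountableTopology E]

theorem square_loss_tail_estimate_general {X : Type*} [MeasurableSpace X] (ρ : Measure (X × E))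
    {ε σ : ℝ} (hε : 0 ≤ ε) (hσ : 0 < σ) (hmom : Integrable (fun p : X × E ↦ ‖p.2‖ ^ (1 + ε)) ρ)
    {f g : X → E} (hf_meas : Measurable f) (hg_meas : Measurable g)
    (hf : BddAbove (Set.range fun x ↦ ‖f x‖)) (hg : BddAbove (Set.range fun x ↦ ‖g x‖)) :
    IntegrableOn (fun p : X × E ↦ ‖p.2 - f p.1‖ ^ 2 - ‖p.2 - g p.1‖ ^ 2)
        {p | σ / 2 ≤ ‖p.2‖} ρ ∧
      |∫ p in {p : X × E | σ / 2 ≤ ‖p.2‖}, (‖p.2 - f p.1‖ ^ 2 - ‖p.2 - g p.1‖ ^ 2) ∂ρ|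
        ≤ (2 : ℝ) ^ (1 + ε) * (⨆ x, ‖f x - g x‖) * (∫ p, ‖p.2‖ ^ (1 + ε) ∂ρ) / σ ^ ε
          + (2 : ℝ) ^ (1 + ε) * ((⨆ x, ‖f x‖) + ⨆ x, ‖g x‖) ^ 2
              * (∫ p, ‖p.2‖ ^ (1 + ε) ∂ρ) / σ ^ (1 + ε) := by
  set D := ⨆ x, ‖f x - g x‖
  set A := (⨆ x, ‖f x‖) + ⨆ x, ‖g x‖
  set C := 2 * D / (σ / 2) ^ ε + A ^ 2 / (σ / 2) ^ (1 + ε) with hC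
  have hD : 0 ≤ D := Real.iSup_nonneg fun _ ↦ norm_nonneg _
  have htail : MeasurableSet {p : X × E | σ / 2 ≤ ‖p.2‖} :=
    measurableSet_le measurable_const (continuous_norm.measurable.comp measurable_snd)
  have hdom : ∀ᵐ p ∂ρ.restrict {p | σ / 2 ≤ ‖p.2‖},
      ‖‖p.2 - f p.1‖ ^ 2 - ‖p.2 - g p.1‖ ^ 2‖ ≤ C * ‖p.2‖ ^ (1 + ε) :=
    ae_restrict_of_forall_mem htail fun p hp ↦
      abs_norm_sub_sq_sub_norm_sub_sq_le_iSup_mul_rpow (half_pos hσ) hε hp hf hg p.1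
  have hint : Integrable (fun p : X × E ↦ C * ‖p.2‖ ^ (1 + ε)) ρ := hmom.const_mul C
  refine ⟨hint.integrableOn.mono' (by fun_prop) hdom, ?_⟩
  calc |∫ p in {p : X × E | σ / 2 ≤ ‖p.2‖}, (‖p.2 - f p.1‖ ^ 2 - ‖p.2 - g p.1‖ ^ 2) ∂ρ|
      ≤ ∫ p in {p : X × E | σ / 2 ≤ ‖p.2‖}, C * ‖p.2‖ ^ (1 + ε) ∂ρ :=
        norm_integral_le_of_norm_le hint.integrableOn hdom
    _ ≤ ∫ p, C * ‖p.2‖ ^ (1 + ε) ∂ρ :=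
        setIntegral_le_integral hint (.of_forall fun p ↦ by positivity)
    _ = _ := by
        rw [integral_const_mul, hC, Real.div_rpow hσ.le zero_le_two,
          Real.div_rpow hσ.le zero_le_two, Real.rpow_add two_pos, Real.rpow_one]
        field_simp

end NormedGroup

/-- Square-loss tail estimate:
`|∫_{|y| ≥ σ/2} [(y−f(x))² − (y−f⋆(x))²] dρ|
   ≤ 2^{1+ε} ‖f−f⋆‖_∞ E|Y|^{1+ε}/σ^ε + 2^{1+ε} (‖f‖_∞+‖f⋆‖_∞)² E|Y|^{1+ε}/σ^{1+ε}`. -/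
theorem square_loss_tail_estimate
    {X : Type*} [MeasurableSpace X] [MetricSpace X] [CompactSpace X] [BorelSpace X]
    (ρ : Measure (X × ℝ)) [IsProbabilityMeasure ρ]
    (ε M σ : ℝ) (hε : 0 < ε) (hσ : max (2 * M) 1 < σ)
    (hmom : Integrable (fun p : X × ℝ => |p.2| ^ (1 + ε)) ρ)
    (fstar : X → ℝ) (hfstar_meas : Measurable fstar)
    (hfstar_bdd : ∀ x, |fstar x| ≤ M)
    (hfstar_mean : ∀ᵐ x ∂ρ.fst, fstar x = ∫ y, y ∂(ρ.condKernel x))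
    (f : X → ℝ) (hf_meas : Measurable f) (hf_bdd : ∀ x, |f x| ≤ M) :
    |∫ p in {p : X × ℝ | σ / 2 ≤ |p.2|},
        ((p.2 - f p.1) ^ 2 - (p.2 - fstar p.1) ^ 2) ∂ρ|
      ≤ (2 : ℝ) ^ (1 + ε) * (⨆ x, |f x - fstar x|) * (∫ p, |p.2| ^ (1 + ε) ∂ρ) / σ ^ ε
        + (2 : ℝ) ^ (1 + ε) * ((⨆ x, |f x|) + ⨆ x, |fstar x|) ^ 2
            * (∫ p, |p.2| ^ (1 + ε) ∂ρ) / σ ^ (1 + ε) := by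
  have hσ0 : 0 < σ := one_pos.trans ((le_max_right _ _).trans_lt hσ)
  simpa only [Real.norm_eq_abs, sq_abs] using
    (square_loss_tail_estimate_general ρ hε.le hσ0 hmom hf_meas hfstar_meas
      ⟨M, Set.forall_mem_range.2 hf_bdd⟩ ⟨M, Set.forall_mem_range.2 hfstar_bdd⟩).2
end

section
/- (Second moment of squared-loss difference, strong moment case.) Suppose E|Y|^{1+ε} < ∞ for some ε > 1, ‖f⋆‖_∞ ≤ M, and f : X → ℝ is measurable with ‖f‖_∞ ≤ M. Then ∫_{X×ℝ} (f(x) − f⋆(x))² (2y − f(x) − f⋆(x))² dρ(x,y) ≤ 64 (M+1)² (E|Y|^{1+ε} + M² + 1) · ‖f − f⋆‖_{2,ρ}^{(2ε−2)/(1+ε)}. -/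
open MeasureTheory

/-!
Put `p = 1 + ε ≥ 2`. The squared difference `F = (f - g)²` is bounded by `4M²`, so
`F ≤ (4M²)^(2/p) F^(1-2/p)`, and Hölder's inequality with the weights `1 - 2/p` and `2/p` gives
`E[F Y²] ≤ (4M²)^(2/p) (E F)^(1-2/p) (E|Y|^p)^(2/p)`. The factor `(2Y - f - g)²` is at most
`8 (Y² + M²)`, and the term with `M²` is the same estimate with the constant `M` in place of `Y`.
Finally `x^(2/p) ≤ x + 1` removes the powers `2/p` from the constants.
-/

section RealPowers

variable {x b : ℝ}

lemma rpow_le_add_one_of_nonneg (hx : 0 ≤ x) (hb : 0 ≤ b) (hb1 : b ≤ 1) : x ^ b ≤ x + 1 :=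
  calc x ^ b ≤ (x + 1) ^ b := by gcongr; linarith
    _ ≤ x + 1 := Real.rpow_le_self_of_one_le (by linarith) hb1

lemma le_rpow_mul_rpow_one_sub {B : ℝ} (hx : 0 ≤ x) (hxB : x ≤ B) (hb : 0 ≤ b) (hb1 : b ≤ 1) :
    x ≤ B ^ b * x ^ (1 - b) :=
  calc x = x ^ b * x ^ (1 - b) := by
        rw [← Real.rpow_add_of_nonneg hx hb (sub_nonneg.2 hb1), add_sub_cancel, Real.rpow_one]
    _ ≤ B ^ b * x ^ (1 - b) := by gcongr

lemma abs_rpow_rpow_two_div {p : ℝ} (hp : p ≠ 0) (y : ℝ) : (|y| ^ p) ^ (2 / p) = y ^ 2 := by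
  rw [← Real.rpow_mul (abs_nonneg y), mul_div_cancel₀ _ hp, Real.rpow_two, sq_abs]

end RealPowers

section Hoelder

variable {Ω : Type*} [MeasurableSpace Ω] {μ : Measure Ω} {F G : Ω → ℝ}

lemma integrable_rpow_mul_rpow {a b : ℝ} (ha : 0 ≤ a) (hb : 0 ≤ b) (hab : a + b = 1)
    (hF : Integrable F μ) (hG : Integrable G μ) (hF0 : 0 ≤ᵐ[μ] F) (hG0 : 0 ≤ᵐ[μ] G) :
    Integrable (fun ω => F ω ^ a * G ω ^ b) μ := by
  have hmeas : AEStronglyMeasurable (fun ω => F ω ^ a * G ω ^ b) μ :=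
    ((hF.aemeasurable.pow_const a).mul (hG.aemeasurable.pow_const b)).aestronglyMeasurable
  refine ((hF.const_mul a).add (hG.const_mul b)).mono' hmeas ?_
  filter_upwards [hF0, hG0] with ω (hFω : 0 ≤ F ω) (hGω : 0 ≤ G ω)
  rw [Real.norm_of_nonneg (by positivity)]
  exact Real.geom_mean_le_arith_mean2_weighted ha hb hFω hGω hab

lemma integral_rpow_mul_rpow_le_s10 {a b : ℝ} (ha : 0 ≤ a) (hb : 0 ≤ b) (hab : a + b = 1)
    (hF : Integrable F μ) (hG : Integrable G μ) (hF0 : 0 ≤ᵐ[μ] F) (hG0 : 0 ≤ᵐ[μ] G) :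
    ∫ ω, F ω ^ a * G ω ^ b ∂μ ≤ (∫ ω, F ω ∂μ) ^ a * (∫ ω, G ω ∂μ) ^ b := by
  have hIF : 0 ≤ ∫ ω, F ω ∂μ := integral_nonneg_of_ae hF0
  have hIG : 0 ≤ ∫ ω, G ω ∂μ := integral_nonneg_of_ae hG0
  have hprod0 : 0 ≤ᵐ[μ] fun ω => F ω ^ a * G ω ^ b := by
    filter_upwards [hF0, hG0] with ω (hFω : 0 ≤ F ω) (hGω : 0 ≤ G ω)
    exact mul_nonneg (Real.rpow_nonneg hFω a) (Real.rpow_nonneg hGω b)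
  have hofReal : ∀ᵐ ω ∂μ, ENNReal.ofReal (F ω ^ a * G ω ^ b)
      = ENNReal.ofReal (F ω) ^ a * ENNReal.ofReal (G ω) ^ b := by
    filter_upwards [hF0, hG0] with ω (hFω : 0 ≤ F ω) (hGω : 0 ≤ G ω)
    rw [ENNReal.ofReal_mul (by positivity), ENNReal.ofReal_rpow_of_nonneg hFω ha,
      ENNReal.ofReal_rpow_of_nonneg hGω hb]
  rw [← ENNReal.ofReal_le_ofReal_iff (by positivity), ENNReal.ofReal_mul (by positivity),
    ← ENNReal.ofReal_rpow_of_nonneg hIF ha, ← ENNReal.ofReal_rpow_of_nonneg hIG hb,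
    ofReal_integral_eq_lintegral_ofReal (integrable_rpow_mul_rpow ha hb hab hF hG hF0 hG0) hprod0,
    ofReal_integral_eq_lintegral_ofReal hF hF0, ofReal_integral_eq_lintegral_ofReal hG hG0,
    lintegral_congr_ae hofReal]
  exact ENNReal.lintegral_mul_norm_pow_le hF.aemeasurable.ennreal_ofReal
    hG.aemeasurable.ennreal_ofReal ha hb hab

variable {B b : ℝ}

lemma ae_mul_rpow_le_of_le (hb : 0 ≤ b) (hb1 : b ≤ 1) (hF0 : 0 ≤ᵐ[μ] F) (hG0 : 0 ≤ᵐ[μ] G)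
    (hFB : ∀ᵐ ω ∂μ, F ω ≤ B) :
    ∀ᵐ ω ∂μ, F ω * G ω ^ b ≤ B ^ b * (F ω ^ (1 - b) * G ω ^ b) := by
  filter_upwards [hF0, hG0, hFB] with ω hFω hGω hFBω
  rw [← mul_assoc]
  exact mul_le_mul_of_nonneg_right (le_rpow_mul_rpow_one_sub hFω hFBω hb hb1)
    (Real.rpow_nonneg hGω b)

lemma ae_mul_rpow_nonneg (hF0 : 0 ≤ᵐ[μ] F) (hG0 : 0 ≤ᵐ[μ] G) :
    0 ≤ᵐ[μ] fun ω => F ω * G ω ^ b := by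
  filter_upwards [hF0, hG0] with ω hFω hGω using mul_nonneg hFω (Real.rpow_nonneg hGω b)

lemma integrable_mul_rpow_of_le (hb : 0 ≤ b) (hb1 : b ≤ 1) (hF : Integrable F μ)
    (hG : Integrable G μ) (hF0 : 0 ≤ᵐ[μ] F) (hG0 : 0 ≤ᵐ[μ] G) (hFB : ∀ᵐ ω ∂μ, F ω ≤ B) :
    Integrable (fun ω => F ω * G ω ^ b) μ := by
  refine ((integrable_rpow_mul_rpow (sub_nonneg.2 hb1) hb (sub_add_cancel 1 b) hF hG hF0
    hG0).const_mul (B ^ b)).mono'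
    (hF.aemeasurable.mul (hG.aemeasurable.pow_const b)).aestronglyMeasurable ?_
  filter_upwards [ae_mul_rpow_le_of_le hb hb1 hF0 hG0 hFB, ae_mul_rpow_nonneg hF0 hG0]
    with ω hle hnonneg
  rwa [Real.norm_of_nonneg hnonneg]

lemma integral_mul_rpow_le_of_le_s10 (hb : 0 ≤ b) (hb1 : b ≤ 1) (hB : 0 ≤ B) (hF : Integrable F μ)
    (hG : Integrable G μ) (hF0 : 0 ≤ᵐ[μ] F) (hG0 : 0 ≤ᵐ[μ] G) (hFB : ∀ᵐ ω ∂μ, F ω ≤ B) :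
    ∫ ω, F ω * G ω ^ b ∂μ ≤ B ^ b * ((∫ ω, F ω ∂μ) ^ (1 - b) * (∫ ω, G ω ∂μ) ^ b) :=
  have hint : Integrable (fun ω => F ω ^ (1 - b) * G ω ^ b) μ :=
    integrable_rpow_mul_rpow (sub_nonneg.2 hb1) hb (sub_add_cancel 1 b) hF hG hF0 hG0
  calc ∫ ω, F ω * G ω ^ b ∂μ ≤ ∫ ω, B ^ b * (F ω ^ (1 - b) * G ω ^ b) ∂μ :=
        integral_mono_ae (integrable_mul_rpow_of_le hb hb1 hF hG hF0 hG0 hFB)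
          (hint.const_mul _) (ae_mul_rpow_le_of_le hb hb1 hF0 hG0 hFB)
    _ = B ^ b * ∫ ω, F ω ^ (1 - b) * G ω ^ b ∂μ := integral_const_mul _ _
    _ ≤ B ^ b * ((∫ ω, F ω ∂μ) ^ (1 - b) * (∫ ω, G ω ∂μ) ^ b) := by
        gcongr
        exact integral_rpow_mul_rpow_le_s10 (sub_nonneg.2 hb1) hb (sub_add_cancel 1 b) hF hG hF0 hG0

variable {Y : Ω → ℝ} {p : ℝ}

lemma integrable_mul_sq_of_le (hp : 2 ≤ p) (hF : Integrable F μ)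
    (hY : Integrable (fun ω => |Y ω| ^ p) μ) (hF0 : 0 ≤ᵐ[μ] F) (hFB : ∀ᵐ ω ∂μ, F ω ≤ B) :
    Integrable (fun ω => F ω * Y ω ^ 2) μ := by
  have hp0 : 0 < p := by linarith
  simpa only [abs_rpow_rpow_two_div hp0.ne'] using
    integrable_mul_rpow_of_le (b := 2 / p) (by positivity) ((div_le_one hp0).2 hp) hF hY hF0
      (.of_forall fun ω => by positivity) hFB

lemma integral_mul_sq_le_of_le (hp : 2 ≤ p) (hB : 0 ≤ B) (hF : Integrable F μ)
    (hY : Integrable (fun ω => |Y ω| ^ p) μ) (hF0 : 0 ≤ᵐ[μ] F) (hFB : ∀ᵐ ω ∂μ, F ω ≤ B) :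
    ∫ ω, F ω * Y ω ^ 2 ∂μ
      ≤ B ^ (2 / p) * ((∫ ω, F ω ∂μ) ^ (1 - 2 / p) * (∫ ω, |Y ω| ^ p ∂μ) ^ (2 / p)) := by
  have hp0 : 0 < p := by linarith
  simpa only [abs_rpow_rpow_two_div hp0.ne'] using
    integral_mul_rpow_le_of_le_s10 (b := 2 / p) (by positivity) ((div_le_one hp0).2 hp) hB hF hY hF0
      (.of_forall fun ω => by positivity) hFB

lemma integral_mul_sq_add_sq_le_of_le [IsProbabilityMeasure μ] (hp : 2 ≤ p) (hB : 0 ≤ B)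
    (hF : Integrable F μ) (hY : Integrable (fun ω => |Y ω| ^ p) μ) (hF0 : 0 ≤ᵐ[μ] F)
    (hFB : ∀ᵐ ω ∂μ, F ω ≤ B) (c : ℝ) :
    ∫ ω, F ω * (Y ω ^ 2 + c ^ 2) ∂μ
      ≤ B ^ (2 / p) * ((∫ ω, |Y ω| ^ p ∂μ) ^ (2 / p) + c ^ 2) * (∫ ω, F ω ∂μ) ^ (1 - 2 / p) := by
  have hp0 : p ≠ 0 := by linarith
  have hconst : ∫ ω, F ω * c ^ 2 ∂μ ≤ B ^ (2 / p) * ((∫ ω, F ω ∂μ) ^ (1 - 2 / p) * c ^ 2) := by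
    simpa only [integral_const, probReal_univ, one_smul, abs_rpow_rpow_two_div hp0] using
      integral_mul_sq_le_of_le (Y := fun _ => c) hp hB hF (integrable_const _) hF0 hFB
  calc ∫ ω, F ω * (Y ω ^ 2 + c ^ 2) ∂μ
      = ∫ ω, F ω * Y ω ^ 2 ∂μ + ∫ ω, F ω * c ^ 2 ∂μ := by
        simp only [mul_add]
        exact integral_add (integrable_mul_sq_of_le hp hF hY hF0 hFB) (hF.mul_const _)
    _ ≤ _ := add_le_add (integral_mul_sq_le_of_le hp hB hF hY hF0 hFB) hconst
    _ = _ := by ring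

end Hoelder

section SquareLoss

lemma sq_sub_le_four_mul_sq {u v M : ℝ} (hu : |u| ≤ M) (hv : |v| ≤ M) :
    (u - v) ^ 2 ≤ 4 * M ^ 2 := by
  obtain ⟨hu₁, hu₂⟩ := abs_le.1 hu
  obtain ⟨hv₁, hv₂⟩ := abs_le.1 hv
  calc (u - v) ^ 2 ≤ (2 * M) ^ 2 := sq_le_sq' (by linarith) (by linarith)
    _ = 4 * M ^ 2 := by ring

lemma sq_two_mul_sub_sub_le {u v M : ℝ} (hu : |u| ≤ M) (hv : |v| ≤ M) (y : ℝ) :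
    (2 * y - u - v) ^ 2 ≤ 8 * (y ^ 2 + M ^ 2) := by
  have huv : (u - -v) ^ 2 ≤ 4 * M ^ 2 := sq_sub_le_four_mul_sq hu (by rwa [abs_neg])
  calc (2 * y - u - v) ^ 2 = (2 * y + -(u - -v)) ^ 2 := by ring
    _ ≤ 2 * ((2 * y) ^ 2 + (-(u - -v)) ^ 2) := add_sq_le
    _ ≤ 8 * (y ^ 2 + M ^ 2) := by linarith

variable {Ω : Type*} [MeasurableSpace Ω] {μ : Measure Ω} [IsProbabilityMeasure μ]
  {U V Y : Ω → ℝ} {M p : ℝ}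

lemma integral_sq_sub_mul_sq_le (hp : 2 ≤ p) (hY : Integrable (fun ω => |Y ω| ^ p) μ)
    (hU : AEMeasurable U μ) (hV : AEMeasurable V μ)
    (hUM : ∀ᵐ ω ∂μ, |U ω| ≤ M) (hVM : ∀ᵐ ω ∂μ, |V ω| ≤ M) :
    ∫ ω, (U ω - V ω) ^ 2 * (2 * Y ω - U ω - V ω) ^ 2 ∂μ
      ≤ 8 * (4 * M ^ 2) ^ (2 / p) * ((∫ ω, |Y ω| ^ p ∂μ) ^ (2 / p) + M ^ 2)
          * (∫ ω, (U ω - V ω) ^ 2 ∂μ) ^ (1 - 2 / p) := by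
  have hFB : ∀ᵐ ω ∂μ, (U ω - V ω) ^ 2 ≤ 4 * M ^ 2 := by
    filter_upwards [hUM, hVM] with ω hUω hVω using sq_sub_le_four_mul_sq hUω hVω
  have hF : Integrable (fun ω => (U ω - V ω) ^ 2) μ :=
    .of_bound ((hU.sub hV).pow_const 2).aestronglyMeasurable (4 * M ^ 2) <| by
      simpa only [Real.norm_of_nonneg (sq_nonneg _)] using hFB
  have hF0 : 0 ≤ᵐ[μ] fun ω => (U ω - V ω) ^ 2 := .of_forall fun _ => sq_nonneg _
  have hint : Integrable (fun ω => (U ω - V ω) ^ 2 * (Y ω ^ 2 + M ^ 2)) μ := by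
    simp only [mul_add]
    exact (integrable_mul_sq_of_le hp hF hY hF0 hFB).add (hF.mul_const _)
  calc ∫ ω, (U ω - V ω) ^ 2 * (2 * Y ω - U ω - V ω) ^ 2 ∂μ
      ≤ ∫ ω, 8 * ((U ω - V ω) ^ 2 * (Y ω ^ 2 + M ^ 2)) ∂μ := by
        refine integral_mono_of_nonneg (.of_forall fun _ => by positivity) (hint.const_mul 8) ?_
        filter_upwards [hUM, hVM] with ω hUω hVω
        rw [mul_left_comm]
        gcongr
        exact sq_two_mul_sub_sub_le hUω hVω (Y ω)
    _ = 8 * ∫ ω, (U ω - V ω) ^ 2 * (Y ω ^ 2 + M ^ 2) ∂μ := integral_const_mul _ _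
    _ ≤ 8 * ((4 * M ^ 2) ^ (2 / p) * ((∫ ω, |Y ω| ^ p ∂μ) ^ (2 / p) + M ^ 2)
          * (∫ ω, (U ω - V ω) ^ 2 ∂μ) ^ (1 - 2 / p)) := by
        gcongr
        exact integral_mul_sq_add_sq_le_of_le hp (by positivity) hF hY hF0 hFB M
    _ = _ := by ring

end SquareLoss

theorem second_moment_square_loss_diff_strong_general {X : Type*} [MeasurableSpace X]
    (ρ : Measure (X × ℝ)) [IsProbabilityMeasure ρ] {ε M : ℝ} (hε : 1 ≤ ε)
    (hmom : Integrable (fun p : X × ℝ => |p.2| ^ (1 + ε)) ρ) {f g : X → ℝ}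
    (hf : AEMeasurable f ρ.fst) (hg : AEMeasurable g ρ.fst)
    (hfM : ∀ᵐ x ∂ρ.fst, |f x| ≤ M) (hgM : ∀ᵐ x ∂ρ.fst, |g x| ≤ M) :
    ∫ p, (f p.1 - g p.1) ^ 2 * (2 * p.2 - f p.1 - g p.1) ^ 2 ∂ρ
      ≤ 64 * (M + 1) ^ 2 * ((∫ p, |p.2| ^ (1 + ε) ∂ρ) + M ^ 2 + 1)
          * √(∫ x, (f x - g x) ^ 2 ∂ρ.fst) ^ ((2 * ε - 2) / (1 + ε)) := by
  have hM : 0 ≤ M := let ⟨_, hx⟩ := hfM.exists; (abs_nonneg _).trans hx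
  have hb : 0 ≤ 2 / (1 + ε) := by positivity
  have hb1 : 2 / (1 + ε) ≤ 1 := (div_le_one (by linarith)).2 (by linarith)
  have hfst : ∫ x, (f x - g x) ^ 2 ∂ρ.fst = ∫ p, (f p.1 - g p.1) ^ 2 ∂ρ :=
    integral_map measurable_fst.aemeasurable ((hf.sub hg).pow_const 2).aestronglyMeasurable
  have hexp : 1 - 2 / (1 + ε) = (2 * ε - 2) / (1 + ε) / 2 := by field_simp; ring
  have hmain := integral_sq_sub_mul_sq_le (by linarith) hmom
    (hf.comp_measurable measurable_fst) (hg.comp_measurable measurable_fst)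
    (ae_of_ae_map measurable_fst.aemeasurable hfM) (ae_of_ae_map measurable_fst.aemeasurable hgM)
  have hM_rpow : (4 * M ^ 2) ^ (2 / (1 + ε)) ≤ 8 * (M + 1) ^ 2 :=
    (rpow_le_add_one_of_nonneg (by positivity) hb hb1).trans (by nlinarith)
  have hmom_rpow : (∫ p, |p.2| ^ (1 + ε) ∂ρ) ^ (2 / (1 + ε)) ≤ (∫ p, |p.2| ^ (1 + ε) ∂ρ) + 1 :=
    rpow_le_add_one_of_nonneg (by positivity) hb hb1
  rw [← Real.rpow_div_two_eq_sqrt _ (by positivity), ← hexp, hfst]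
  refine hmain.trans ?_
  gcongr ?_ * ?_ * _ <;> linarith

/-- Second moment of the squared-loss difference, strong moment case (`ε > 1`):
`∫ (f−f⋆)² (2y−f−f⋆)² dρ ≤ 64 (M+1)² (E|Y|^{1+ε}+M²+1) ‖f−f⋆‖_{2,ρ}^{(2ε−2)/(1+ε)}`. -/
theorem second_moment_square_loss_diff_strong
    {X : Type*} [MeasurableSpace X] [MetricSpace X] [CompactSpace X] [BorelSpace X]
    (ρ : Measure (X × ℝ)) [IsProbabilityMeasure ρ]
    (ε M : ℝ) (hε : 1 < ε) (hM : 0 ≤ M)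
    (hmom : Integrable (fun p : X × ℝ => |p.2| ^ (1 + ε)) ρ)
    (fstar : X → ℝ) (hfstar_meas : Measurable fstar)
    (hfstar_bdd : ∀ x, |fstar x| ≤ M)
    (hfstar_mean : ∀ᵐ x ∂ρ.fst, fstar x = ∫ y, y ∂(ρ.condKernel x))
    (f : X → ℝ) (hf_meas : Measurable f) (hf_bdd : ∀ x, |f x| ≤ M) :
    (∫ p, (f p.1 - fstar p.1) ^ 2 * (2 * p.2 - f p.1 - fstar p.1) ^ 2 ∂ρ)
      ≤ 64 * (M + 1) ^ 2 * ((∫ p, |p.2| ^ (1 + ε) ∂ρ) + M ^ 2 + 1)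
          * (Real.sqrt (∫ x, (f x - fstar x) ^ 2 ∂ρ.fst)) ^ ((2 * ε - 2) / (1 + ε)) := by
  exact second_moment_square_loss_diff_strong_general ρ hε.le hmom hf_meas.aemeasurable
    hfstar_meas.aemeasurable (.of_forall hf_bdd) (.of_forall hfstar_bdd)
end

section
/- (Derivative of the expected Huber loss for a density.) Let σ > 0 and let p : ℝ → [0,∞) be a probability density (∫_ℝ p = 1) with finite first moment ∫_ℝ |u| p(u) du < ∞. Then the function F(ν) = ∫_ℝ ℓ_σ(u − ν) p(u) du is differentiable at every ν ∈ ℝ with F′(ν) = −2 ∫_ℝ (u − ν) p(u) du + 2 ∫_{ν+σ}^{∞} (u − ν − σ) p(u) du + 2 ∫_{−∞}^{ν−σ} (u − ν + σ) p(u) du. -/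
open MeasureTheory

/-! The Huber loss is the square with the squared excesses over `[-σ, σ]` removed,
`ℓ_σ(t) = t² - ((t - σ)⁺)² - ((t + σ)⁻)²`. Since `(x⁺)²` has derivative `2 x⁺`, the loss is
differentiable everywhere, with derivative bounded by `2σ`. Hence `2σ |p(u)|` dominates the
derivative of the integrand and one can differentiate under the integral sign. The three terms of
the derivative of the loss become the three integrals. -/

open Filter Topology
open scoped NNReal

section Calculus

lemma hasDerivAt_of_eventually_norm_sub_sub_le_sq {𝕜 E : Type*} [NontriviallyNormedField 𝕜]
    [NormedAddCommGroup E] [NormedSpace 𝕜 E] {f : 𝕜 → E} {f' : E} {x : 𝕜} {C : ℝ}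
    (h : ∀ᶠ y in 𝓝 x, ‖f y - f x - (y - x) • f'‖ ≤ C * ‖y - x‖ ^ 2) : HasDerivAt f f' x := by
  rw [hasDerivAt_iff_isLittleO]
  have remainder_isBigO : (fun y => f y - f x - (y - x) • f') =O[𝓝 x] fun y => ‖y - x‖ ^ 2 :=
    .of_bound C (by simpa only [norm_pow, norm_norm] using h)
  exact remainder_isBigO.trans_isLittleO (Asymptotics.isLittleO_pow_sub_sub x one_lt_two)

lemma abs_posPart_sq_sub_sub_le (x y : ℝ) :
    |y⁺ ^ 2 - x⁺ ^ 2 - (y - x) * (2 * x⁺)| ≤ (y - x) ^ 2 := by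
  rw [abs_le]
  rcases le_total 0 x with hx | hx <;> rcases le_total 0 y with hy | hy <;>
    simp only [posPart_of_nonneg, posPart_of_nonpos, hx, hy] <;> constructor <;> nlinarith

lemma hasDerivAt_posPart_sq (x : ℝ) : HasDerivAt (fun y : ℝ => y⁺ ^ 2) (2 * x⁺) x :=
  hasDerivAt_of_eventually_norm_sub_sub_le_sq (C := 1) <| .of_forall fun y => by
    simpa using abs_posPart_sq_sub_sub_le x y

lemma hasDerivAt_negPart_sq (x : ℝ) : HasDerivAt (fun y : ℝ => y⁻ ^ 2) (-(2 * x⁻)) x := by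
  simpa [Function.comp_def] using (hasDerivAt_posPart_sq (-x)).comp x (hasDerivAt_neg x)

end Calculus

section HuberLoss

/-- The derivative of the Huber loss, the score function of robust statistics. For `0 ≤ σ` it is
`2 t` clipped to `[-2 σ, 2 σ]`; it is written as `2 t` minus the excess over that interval because
the two excesses are integrated separately. -/
noncomputable def huberScore (σ t : ℝ) : ℝ :=
  2 * t - 2 * (t - σ)⁺ + 2 * (t + σ)⁻

variable {σ : ℝ}

lemma huberLoss_eq_sq_sub_posPart_sq_sub_negPart_sq (hσ : 0 ≤ σ) (t : ℝ) :
    huberLoss σ t = t ^ 2 - (t - σ)⁺ ^ 2 - (t + σ)⁻ ^ 2 := by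
  rw [huberLoss]
  split_ifs with ht
  · obtain ⟨hl, hr⟩ := abs_le.1 ht
    rw [posPart_of_nonpos (by linarith), negPart_of_nonneg (by linarith)]
    ring
  · rcases lt_abs.1 (not_le.1 ht) with hr | hl
    · rw [abs_of_nonneg (by linarith), posPart_of_nonneg (by linarith),
        negPart_of_nonneg (by linarith)]
      ring
    · rw [abs_of_nonpos (by linarith), posPart_of_nonpos (by linarith),
        negPart_of_nonpos (by linarith)]
      ring

lemma hasDerivAt_huberLoss (hσ : 0 ≤ σ) (t : ℝ) :
    HasDerivAt (huberLoss σ) (huberScore σ t) t := by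
  rw [funext (huberLoss_eq_sq_sub_posPart_sq_sub_negPart_sq hσ)]
  have right_excess := (hasDerivAt_posPart_sq (t - σ)).comp_sub_const t σ
  have left_excess := (hasDerivAt_negPart_sq (t + σ)).comp_add_const t σ
  simpa [huberScore] using ((hasDerivAt_pow 2 t).fun_sub right_excess).fun_sub left_excess

lemma abs_huberScore_le (hσ : 0 ≤ σ) (t : ℝ) : |huberScore σ t| ≤ 2 * σ := by
  rw [huberScore, posPart_eq_ite, negPart_eq_ite, abs_le]
  split_ifs <;> constructor <;> linarith

lemma lipschitzWith_huberLoss (hσ : 0 ≤ σ) : LipschitzWith (2 * σ).toNNReal (huberLoss σ) := by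
  refine lipschitzWith_of_nnnorm_deriv_le
    (fun t => (hasDerivAt_huberLoss hσ t).differentiableAt) fun t => ?_
  rw [(hasDerivAt_huberLoss hσ t).deriv, Real.le_toNNReal_iff_coe_le (by positivity)]
  exact abs_huberScore_le hσ t

end HuberLoss

section WeightedIntegral

lemma integrable_mul_of_lipschitzWith {E : Type*} [SeminormedAddCommGroup E] [MeasurableSpace E]
    [OpensMeasurableSpace E] {μ : Measure E} {φ p : E → ℝ} {C : ℝ≥0} (hφ : LipschitzWith C φ)
    (hp : Integrable p μ) (hp_mom : Integrable (fun u => ‖u‖ * p u) μ) :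
    Integrable (fun u => φ u * p u) μ := by
  have growth (u : E) : ‖φ u‖ ≤ |φ 0| + C * ‖u‖ := by
    have increment_le : ‖φ u - φ 0‖ ≤ C * ‖u‖ := by
      simpa only [sub_zero] using hφ.norm_sub_le u 0
    linarith [norm_le_norm_add_norm_sub' (φ u) (φ 0), Real.norm_eq_abs (φ 0)]
  have bound_integrable := (hp.norm.const_mul |φ 0|).add (hp_mom.norm.const_mul (C : ℝ))
  refine bound_integrable.mono'
    (hφ.continuous.measurable.aestronglyMeasurable.mul hp.aestronglyMeasurable)
    (.of_forall fun u => ?_)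
  calc ‖φ u * p u‖ = ‖φ u‖ * ‖p u‖ := norm_mul _ _
    _ ≤ (|φ 0| + C * ‖u‖) * ‖p u‖ := by gcongr; exact growth u
    _ = |φ 0| * ‖p u‖ + C * ‖‖u‖ * p u‖ := by rw [norm_mul, norm_norm]; ring

variable {μ : Measure ℝ} {p : ℝ → ℝ}

lemma integrable_comp_sub_mul_of_lipschitzWith {φ : ℝ → ℝ} {C : ℝ≥0} (hφ : LipschitzWith C φ)
    (hp : Integrable p μ) (hp_mom : Integrable (fun u => |u| * p u) μ) (a : ℝ) :
    Integrable (fun u => φ (u - a) * p u) μ := by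
  have shift : LipschitzWith 1 fun u : ℝ => u - a := (IsometryEquiv.subRight a).isometry.lipschitz
  exact integrable_mul_of_lipschitzWith (hφ.comp shift) hp hp_mom

lemma hasDerivAt_integral_comp_sub_mul {φ φ' : ℝ → ℝ} {C : ℝ≥0} (hφ : LipschitzWith C φ)
    (hφ' : ∀ x, HasDerivAt φ (φ' x) x)
    (hp : Integrable p μ) (hp_mom : Integrable (fun u => |u| * p u) μ) (ν : ℝ) :
    HasDerivAt (fun t => ∫ u, φ (u - t) * p u ∂μ) (-∫ u, φ' (u - ν) * p u ∂μ) ν := by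
  have integrable_φ := integrable_comp_sub_mul_of_lipschitzWith hφ hp hp_mom
  have φ'_eq_deriv : φ' = deriv φ := funext fun x => (hφ' x).deriv.symm
  have φ'_measurable : Measurable φ' := φ'_eq_deriv ▸ measurable_deriv φ
  have φ'_le (x : ℝ) : ‖φ' x‖ ≤ C := φ'_eq_deriv ▸ norm_deriv_le_of_lipschitz hφ
  have integrand_hasDerivAt (u t : ℝ) :
      HasDerivAt (fun t => φ (u - t) * p u) (-(φ' (u - t) * p u)) t := by
    simpa using ((hφ' (u - t)).comp_const_sub u t).mul_const (p u)
  have integrand_deriv_le (u t : ℝ) : ‖-(φ' (u - t) * p u)‖ ≤ C * ‖p u‖ := by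
    rw [norm_neg, norm_mul]
    gcongr
    exact φ'_le _
  rw [← integral_neg]
  refine (hasDerivAt_integral_of_dominated_loc_of_deriv_le univ_mem
    (.of_forall fun t => (integrable_φ t).aestronglyMeasurable) (integrable_φ ν) ?_
    (.of_forall fun u t _ => integrand_deriv_le u t) (hp.norm.const_mul (C : ℝ))
    (.of_forall fun u t _ => integrand_hasDerivAt u t)).2
  exact ((φ'_measurable.comp (measurable_sub_const ν)).aestronglyMeasurable.mul
    hp.aestronglyMeasurable).neg

lemma integral_posPart_sub_mul (a : ℝ) :
    ∫ u, (u - a)⁺ * p u ∂μ = ∫ u in Set.Ioi a, (u - a) * p u ∂μ := by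
  rw [← integral_indicator measurableSet_Ioi]
  refine integral_congr_ae (.of_forall fun u => ?_)
  simp only [posPart_eq_ite_lt, Set.indicator_apply, Set.mem_Ioi, sub_pos, ite_mul, zero_mul]

lemma integral_negPart_sub_mul (a : ℝ) :
    ∫ u, (u - a)⁻ * p u ∂μ = -∫ u in Set.Iio a, (u - a) * p u ∂μ := by
  rw [← integral_indicator measurableSet_Iio, ← integral_neg]
  refine integral_congr_ae (.of_forall fun u => ?_)
  simp only [negPart_eq_ite_lt, Set.indicator_apply, Set.mem_Iio, sub_neg]
  split_ifs <;> ring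

lemma integral_huberScore_sub_mul (σ : ℝ) (hp : Integrable p μ)
    (hp_mom : Integrable (fun u => |u| * p u) μ) (ν : ℝ) :
    ∫ u, huberScore σ (u - ν) * p u ∂μ = 2 * (∫ u, (u - ν) * p u ∂μ)
      - 2 * (∫ u in Set.Ioi (ν + σ), (u - ν - σ) * p u ∂μ)
      - 2 * (∫ u in Set.Iio (ν - σ), (u - ν + σ) * p u ∂μ) := by
  have integrable_id : Integrable (fun u => (u - ν) * p u) μ :=
    integrable_comp_sub_mul_of_lipschitzWith .id hp hp_mom ν
  have integrable_right :=
    integrable_comp_sub_mul_of_lipschitzWith lipschitzWith_posPart hp hp_mom (ν + σ)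
  have integrable_left :=
    integrable_comp_sub_mul_of_lipschitzWith lipschitzWith_negPart hp hp_mom (ν - σ)
  have integrable_diff :
      Integrable (fun u => 2 * ((u - ν) * p u) - 2 * ((u - (ν + σ))⁺ * p u)) μ :=
    (integrable_id.const_mul 2).sub (integrable_right.const_mul 2)
  calc ∫ u, huberScore σ (u - ν) * p u ∂μ
      = ∫ u, (2 * ((u - ν) * p u) - 2 * ((u - (ν + σ))⁺ * p u)
          + 2 * ((u - (ν - σ))⁻ * p u)) ∂μ := by
        refine integral_congr_ae (.of_forall fun u => ?_)
        simp only [huberScore, sub_sub, sub_add]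
        ring
    _ = 2 * (∫ u, (u - ν) * p u ∂μ) - 2 * (∫ u, (u - (ν + σ))⁺ * p u ∂μ)
          + 2 * (∫ u, (u - (ν - σ))⁻ * p u ∂μ) := by
        rw [integral_add integrable_diff (integrable_left.const_mul 2),
          integral_sub (integrable_id.const_mul 2) (integrable_right.const_mul 2)]
        simp only [integral_const_mul]
    _ = _ := by
        rw [integral_posPart_sub_mul, integral_negPart_sub_mul]
        simp only [sub_sub, sub_add]
        ring

end WeightedIntegral

theorem hasDerivAt_expected_huber_loss_general {μ : Measure ℝ} {σ : ℝ} (hσ : 0 ≤ σ) {p : ℝ → ℝ}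
    (hp : Integrable p μ) (hp_mom : Integrable (fun u => |u| * p u) μ) (ν : ℝ) :
    HasDerivAt (fun t : ℝ => ∫ u, huberLoss σ (u - t) * p u ∂μ)
      (-2 * (∫ u, (u - ν) * p u ∂μ)
        + 2 * (∫ u in Set.Ioi (ν + σ), (u - ν - σ) * p u ∂μ)
        + 2 * (∫ u in Set.Iio (ν - σ), (u - ν + σ) * p u ∂μ)) ν := by
  have score_form := hasDerivAt_integral_comp_sub_mul (lipschitzWith_huberLoss hσ)
    (hasDerivAt_huberLoss hσ) hp hp_mom ν
  rw [integral_huberScore_sub_mul σ hp hp_mom] at score_form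
  convert score_form using 1
  ring

/-- Derivative of the expected Huber loss for a density `p` with finite first moment:
`F(ν) = ∫ ℓ_σ(u − ν) p(u) du` is differentiable with
`F′(ν) = −2∫(u−ν)p(u)du + 2∫_{ν+σ}^∞ (u−ν−σ)p(u)du + 2∫_{−∞}^{ν−σ} (u−ν+σ)p(u)du`. -/
theorem hasDerivAt_expected_huber_loss
    (σ : ℝ) (hσ : 0 < σ)
    (p : ℝ → ℝ) (hp_meas : Measurable p) (hp_nonneg : ∀ u, 0 ≤ p u)
    (hp_int : Integrable p) (hp_prob : (∫ u, p u) = 1)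
    (hp_mom : Integrable (fun u => |u| * p u)) (ν : ℝ) :
    HasDerivAt (fun t : ℝ => ∫ u, huberLoss σ (u - t) * p u)
      (-2 * (∫ u, (u - ν) * p u)
        + 2 * (∫ u in Set.Ioi (ν + σ), (u - ν - σ) * p u)
        + 2 * (∫ u in Set.Iio (ν - σ), (u - ν + σ) * p u)) ν :=
  hasDerivAt_expected_huber_loss_general hσ.le hp_int hp_mom ν
end

section
/- (Positivity of the Huber-risk derivative at zero for an asymmetric zero-mean density.) Let p_ε : ℝ → ℝ be the probability density defined by p_ε(t) = (1/2) e^{−(t + 1/4)} for t ≥ −1/4 and p_ε(t) = e^{2(t + 1/4)} for t < −1/4. Then for every σ > 0, 2 ∫_σ^{∞} (u − σ) p_ε(u) du + 2 ∫_{−∞}^{−σ} (u + σ) p_ε(u) du > 0. (In particular, for σ ≥ 1/4 this quantity equals e^{−σ−1/4} − (1/2) e^{1/2 − 2σ}, and for 0 < σ < 1/4 it equals 2σ + e^{−σ−1/4} − e^{σ−1/4}.) -/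
open MeasureTheory

/-- The asymmetric zero-mean density `p_ε` from the counterexample. -/
noncomputable def pEps (t : ℝ) : ℝ :=
  if -(1/4) ≤ t then (1/2) * Real.exp (-(t + 1/4)) else Real.exp (2 * (t + 1/4))

/-!
Splitting `∫ (u - a) p(u) du` at `a` shows that the two tail integrals of a zero-mean density `p`
at the level `a` sum to `-a`. Hence, for `σ < 1/4`, the left tail at `-σ`, which straddles the
breakpoint `-1/4`, can be traded for the right tail at `-σ`, and this lies in the region where
`pEps` is a single exponential. Each value is then positive by an elementary estimate: `exp` is a
strict contraction on `(-∞, 0]` when `σ < 1/4`, and `1/2 < log 2` when `1/4 ≤ σ`.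
-/

open Set Real
open scoped Nat

lemma integral_Ioi_sub_pow_mul_exp {b : ℝ} (hb : 0 < b) (a : ℝ) (n : ℕ) :
    ∫ u in Ioi a, (u - a) ^ n * exp (-(b * (u - a))) = n ! / b ^ (n + 1) := by
  have hshift := (measurePreserving_sub_right volume a).setIntegral_preimage_emb
    (MeasurableEquiv.subRight a).measurableEmbedding
    (fun t : ℝ => t ^ n * exp (-(b * t))) (Ioi 0)
  rw [preimage_sub_const_Ioi, zero_add] at hshift
  have hgamma := integral_rpow_mul_exp_neg_mul_Ioi (a := n + 1) (by positivity) hb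
  simp only [add_sub_cancel_right, rpow_natCast, Gamma_nat_eq_factorial] at hgamma
  rw [hshift, hgamma, ← Nat.cast_add_one, rpow_natCast, one_div_pow, one_div_mul_eq_div]

lemma integral_Iio_sub_pow_mul_exp {b : ℝ} (hb : 0 < b) (a : ℝ) (n : ℕ) :
    ∫ u in Iio a, (u - a) ^ n * exp (b * (u - a)) = (-1) ^ n * n ! / b ^ (n + 1) := by
  have hreflect := (Measure.measurePreserving_neg volume).setIntegral_preimage_emb
    (MeasurableEquiv.neg ℝ).measurableEmbedding
    (fun t : ℝ => (t - -a) ^ n * exp (-(b * (t - -a)))) (Ioi (-a))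
  rw [integral_Ioi_sub_pow_mul_exp hb] at hreflect
  have hpoint (u : ℝ) : (u - a) ^ n * exp (b * (u - a))
      = (-1) ^ n * ((-u - -a) ^ n * exp (-(b * (-u - -a)))) := by
    rw [← mul_assoc, ← mul_pow]
    ring_nf
  simp_rw [hpoint, integral_const_mul]
  rw [mul_div_assoc, ← hreflect, neg_preimage, neg_Ioi, neg_neg]

lemma setIntegral_Iio_sub_mul_add_setIntegral_Ioi_sub_mul {μ : Measure ℝ} {f : ℝ → ℝ}
    (hf : Integrable f μ) (hf' : Integrable (fun u => u * f u) μ) (a : ℝ) :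
    ∫ u in Iio a, (u - a) * f u ∂μ + ∫ u in Ioi a, (u - a) * f u ∂μ
      = ∫ u, u * f u ∂μ - a * ∫ u, f u ∂μ := by
  have hint : Integrable (fun u => (u - a) * f u) μ := by
    simp only [sub_mul]
    exact hf'.sub (hf.const_mul a)
  have hIci : ∫ u in Ici a, (u - a) * f u ∂μ = ∫ u in Ioi a, (u - a) * f u ∂μ :=
    setIntegral_eq_of_subset_of_forall_sdiff_eq_zero measurableSet_Ici Ioi_subset_Ici_self
      fun u ⟨hle, hlt⟩ => by rw [le_antisymm (not_lt.1 hlt) (mem_Ici.1 hle), sub_self, zero_mul]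
  rw [← hIci, intervalIntegral.integral_Iio_add_Ici hint.integrableOn hint.integrableOn,
    ← integral_const_mul, ← integral_sub hf' (hf.const_mul a)]
  simp only [sub_mul]

lemma setIntegral_Ioi_sub_pow_mul_pEps {a : ℝ} (ha : -(1 / 4) ≤ a) (n : ℕ) :
    ∫ u in Ioi a, (u - a) ^ n * pEps u = n ! / 2 * exp (-(a + 1 / 4)) := by
  have hcongr : EqOn (fun u => (u - a) ^ n * pEps u)
      (fun u => exp (-(a + 1 / 4)) / 2 * ((u - a) ^ n * exp (-(1 * (u - a))))) (Ioi a) := by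
    intro u hu
    simp only [pEps, if_pos (ha.trans (le_of_lt hu))]
    rw [show -(u + 1 / 4) = -(a + 1 / 4) + -(1 * (u - a)) by ring, exp_add]
    ring
  rw [setIntegral_congr_fun measurableSet_Ioi hcongr, integral_const_mul,
    integral_Ioi_sub_pow_mul_exp one_pos]
  ring

lemma setIntegral_Iio_sub_pow_mul_pEps {a : ℝ} (ha : a ≤ -(1 / 4)) (n : ℕ) :
    ∫ u in Iio a, (u - a) ^ n * pEps u
      = (-1) ^ n * n ! / 2 ^ (n + 1) * exp (2 * (a + 1 / 4)) := by
  have hcongr : EqOn (fun u => (u - a) ^ n * pEps u)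
      (fun u => exp (2 * (a + 1 / 4)) * ((u - a) ^ n * exp (2 * (u - a)))) (Iio a) := by
    intro u hu
    simp only [pEps, if_neg (lt_of_lt_of_le hu ha).not_ge]
    rw [show 2 * (u + 1 / 4) = 2 * (a + 1 / 4) + 2 * (u - a) by ring, exp_add]
    ring
  rw [setIntegral_congr_fun measurableSet_Iio hcongr, integral_const_mul,
    integral_Iio_sub_pow_mul_exp two_pos, mul_comm]

lemma integrable_add_quarter_pow_mul_pEps (n : ℕ) :
    Integrable fun u => (u + 1 / 4) ^ n * pEps u := by
  have hleft : IntegrableOn (fun u => (u - -(1 / 4)) ^ n * pEps u) (Iio (-(1 / 4))) :=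
    .of_integral_ne_zero (by rw [setIntegral_Iio_sub_pow_mul_pEps le_rfl]; positivity)
  have hright : IntegrableOn (fun u => (u - -(1 / 4)) ^ n * pEps u) (Ioi (-(1 / 4))) :=
    .of_integral_ne_zero (by rw [setIntegral_Ioi_sub_pow_mul_pEps le_rfl]; positivity)
  simp only [← sub_neg_eq_add _ (1 / 4 : ℝ)]
  rw [← integrableOn_univ, ← Iio_union_Ici (a := -(1 / 4))]
  exact hleft.union (by rwa [integrableOn_Ici_iff_integrableOn_Ioi])

lemma integral_add_quarter_pow_mul_pEps (n : ℕ) :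
    ∫ u, (u + 1 / 4) ^ n * pEps u = n ! / 2 + (-1) ^ n * n ! / 2 ^ (n + 1) := by
  have hleft := setIntegral_Iio_sub_pow_mul_pEps le_rfl n
  have hright := setIntegral_Ioi_sub_pow_mul_pEps le_rfl n
  simp only [sub_neg_eq_add, neg_add_cancel, mul_zero, neg_zero, exp_zero, mul_one]
    at hleft hright
  have hint := integrable_add_quarter_pow_mul_pEps n
  rw [← intervalIntegral.integral_Iio_add_Ici hint.integrableOn hint.integrableOn,
    integral_Ici_eq_integral_Ioi, hleft, hright, add_comm]

lemma integrable_pEps : Integrable pEps := by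
  simpa using integrable_add_quarter_pow_mul_pEps 0

lemma integral_pEps : ∫ u, pEps u = 1 := by
  simpa [← two_mul] using integral_add_quarter_pow_mul_pEps 0

lemma integrable_mul_pEps : Integrable fun u => u * pEps u := by
  convert! (integrable_add_quarter_pow_mul_pEps 1).sub (integrable_pEps.const_mul (1 / 4)) using 2
  simp only [Pi.sub_apply]
  ring

lemma integral_mul_pEps : ∫ u, u * pEps u = 0 := by
  have hmoment := integral_add_quarter_pow_mul_pEps 1
  simp only [pow_one, add_mul] at hmoment
  rw [integral_add integrable_mul_pEps (integrable_pEps.const_mul _), integral_const_mul,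
    integral_pEps, Nat.factorial_one, Nat.cast_one] at hmoment
  linarith

lemma setIntegral_Ioi_sub_mul_pEps {a : ℝ} (ha : -(1 / 4) ≤ a) :
    ∫ u in Ioi a, (u - a) * pEps u = 1 / 2 * exp (-(a + 1 / 4)) := by
  simpa using setIntegral_Ioi_sub_pow_mul_pEps ha 1

lemma setIntegral_Iio_sub_mul_pEps_of_le_neg_quarter {a : ℝ} (ha : a ≤ -(1 / 4)) :
    ∫ u in Iio a, (u - a) * pEps u = -(1 / 4) * exp (2 * (a + 1 / 4)) := by
  have htail := setIntegral_Iio_sub_pow_mul_pEps ha 1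
  simp only [pow_one, Nat.factorial_one, Nat.cast_one] at htail
  linarith

lemma setIntegral_Iio_sub_mul_pEps_of_neg_quarter_le {a : ℝ} (ha : -(1 / 4) ≤ a) :
    ∫ u in Iio a, (u - a) * pEps u = -a - 1 / 2 * exp (-(a + 1 / 4)) := by
  have hsplit := setIntegral_Iio_sub_mul_add_setIntegral_Ioi_sub_mul
    integrable_pEps integrable_mul_pEps a
  rw [setIntegral_Ioi_sub_mul_pEps ha, integral_mul_pEps, integral_pEps] at hsplit
  linarith

lemma half_mul_exp_lt_exp_iff {x y : ℝ} : 1 / 2 * exp x < exp y ↔ x < y + log 2 := by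
  rw [← exp_lt_exp (x := x), exp_add, exp_log two_pos]
  constructor <;> intro h <;> linarith

lemma exp_sub_exp_lt_sub {x y : ℝ} (hxy : x < y) (hy : y ≤ 0) : exp y - exp x < y - x :=
  calc exp y - exp x = exp y * (1 - exp (-(y - x))) := by
        rw [mul_sub, ← exp_add, mul_one]; ring_nf
    _ < exp y * (y - x) :=
        mul_lt_mul_of_pos_left (by linarith [one_sub_lt_exp_neg (sub_pos.2 hxy).ne']) (exp_pos y)
    _ ≤ y - x := mul_le_of_le_one_left (sub_pos.2 hxy).le (exp_le_one_iff.2 hy)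

/-- Positivity of the Huber-risk derivative at zero for the asymmetric zero-mean
density `p_ε`: for every `σ > 0`,
`2∫_σ^∞ (u−σ) p_ε(u) du + 2∫_{−∞}^{−σ} (u+σ) p_ε(u) du > 0`; moreover this quantity
equals `e^{−σ−1/4} − (1/2) e^{1/2−2σ}` when `σ ≥ 1/4`, and equals
`2σ + e^{−σ−1/4} − e^{σ−1/4}` when `0 < σ < 1/4`. -/
theorem huber_risk_derivative_at_zero_pos (σ : ℝ) (hσ : 0 < σ) :
    0 < 2 * (∫ u in Set.Ioi σ, (u - σ) * pEps u)
        + 2 * (∫ u in Set.Iio (-σ), (u + σ) * pEps u)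
    ∧ (1/4 ≤ σ →
        2 * (∫ u in Set.Ioi σ, (u - σ) * pEps u)
          + 2 * (∫ u in Set.Iio (-σ), (u + σ) * pEps u)
        = Real.exp (-σ - 1/4) - (1/2) * Real.exp (1/2 - 2 * σ))
    ∧ (σ < 1/4 →
        2 * (∫ u in Set.Ioi σ, (u - σ) * pEps u)
          + 2 * (∫ u in Set.Iio (-σ), (u + σ) * pEps u)
        = 2 * σ + Real.exp (-σ - 1/4) - Real.exp (σ - 1/4)) := by
  have hright := setIntegral_Ioi_sub_mul_pEps (by linarith : -(1 / 4) ≤ σ)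
  rcases le_or_gt (1 / 4) σ with h | h
  · have hleft := setIntegral_Iio_sub_mul_pEps_of_le_neg_quarter (neg_le_neg h)
    have hval : 2 * (∫ u in Ioi σ, (u - σ) * pEps u) + 2 * (∫ u in Iio (-σ), (u + σ) * pEps u)
        = exp (-σ - 1 / 4) - 1 / 2 * exp (1 / 2 - 2 * σ) := by
      simp only [← sub_neg_eq_add _ σ, hright, hleft]
      ring_nf
    refine ⟨?_, fun _ => hval, fun h' => absurd h' h.not_gt⟩
    rw [hval, sub_pos, half_mul_exp_lt_exp_iff]
    linarith [log_two_gt_d9]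
  · have hleft := setIntegral_Iio_sub_mul_pEps_of_neg_quarter_le (neg_le_neg h.le)
    have hval : 2 * (∫ u in Ioi σ, (u - σ) * pEps u) + 2 * (∫ u in Iio (-σ), (u + σ) * pEps u)
        = 2 * σ + exp (-σ - 1 / 4) - exp (σ - 1 / 4) := by
      simp only [← sub_neg_eq_add _ σ, hright, hleft]
      ring_nf
    refine ⟨?_, fun h' => absurd h h'.not_gt, fun _ => hval⟩
    linarith [exp_sub_exp_lt_sub (by linarith : -σ - 1 / 4 < σ - 1 / 4) (by linarith)]
end
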